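/- arXiv:1410.1579 — 2 statements merged into one kernel-verified Lean document; each statement's English description precedes it below -/
import Mathlib

section
/- There exists a constant C > 0 such that for every n ∈ ℕ and every plane straight-line graph G on a set of n points in ℝ², the number of star-shaped polygons contained in G is at most C·n³·αⁿ, where α is the unique real root of x³ − x² − x − 1 = 0. -/
open scoped BigOperators

noncomputable section

/-- Points of the plane. -/
abbrev Pt : Type := ℝ × ℝ

/-- Dot product on the plane. -/
def dotp (a b : Pt) : ℝ := a.1 * b.1 + a.2 * b.2

/-- The geometric conditions making `(V, E)` a plane straight-line graph:
every edge joins two distinct points of `V`, no point of `V` lies in the open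
segment of an edge, and the open segments of two distinct edges are disjoint. -/
def ValidEdges (V : Finset Pt) (E : Finset (Sym2 Pt)) : Prop :=
  (∀ a b : Pt, s(a, b) ∈ E → a ∈ V ∧ b ∈ V ∧ a ≠ b) ∧
  (∀ a b : Pt, s(a, b) ∈ E → ∀ v ∈ V, v ∉ openSegment ℝ a b) ∧
  (∀ a b c d : Pt, s(a, b) ∈ E → s(c, d) ∈ E → s(a, b) ≠ s(c, d) →
    openSegment ℝ a b ∩ openSegment ℝ c d = ∅)

/-- A plane straight-line graph. -/
structure PSLG where
  V : Finset Pt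
  E : Finset (Sym2 Pt)
  valid : ValidEdges V E

/-- A path in `G`: a sequence of at least two vertices, consecutive ones joined by edges. -/
def IsPathIn (G : PSLG) (L : List Pt) : Prop :=
  2 ≤ L.length ∧ L.Chain' (fun a b => s(a, b) ∈ G.E)

/-- An x-monotone path: x-coordinates strictly increasing along the path. -/
def IsXMonotonePath (G : PSLG) (L : List Pt) : Prop :=
  IsPathIn G L ∧ L.Chain' (fun a b => a.1 < b.1)

/-- Monotonicity of a vertex sequence in direction `u`. -/
def MonotoneInDir (u : Pt) (L : List Pt) : Prop :=
  L.Chain' (fun a b => 0 < dotp (b - a) u)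

/-- A monotone path: monotone in some direction `u ≠ 0`. -/
def IsMonotonePath (G : PSLG) (L : List Pt) : Prop :=
  IsPathIn G L ∧ ∃ u : Pt, u ≠ 0 ∧ MonotoneInDir u L

/-- The number of x-monotone paths in `G`. -/
def xMonCount (G : PSLG) : ℕ := Set.ncard {L : List Pt | IsXMonotonePath G L}

/-- The number of monotone paths in `G`, a path and its reversal counted once. -/
def monPathCount (G : PSLG) : ℕ :=
  Set.ncard {P : Set (List Pt) | ∃ L, IsMonotonePath G L ∧ P = {L, L.reverse}}

/-- Consecutive pairs along a cycle (including the wrap-around pair). -/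
def cyclePairs (L : List Pt) : List (Pt × Pt) := L.zip (L.rotate 1)

/-- A cycle in `G`: at least 3 pairwise distinct vertices, cyclically joined by edges. -/
def IsCycleIn (G : PSLG) (L : List Pt) : Prop :=
  3 ≤ L.length ∧ L.Nodup ∧ ∀ p ∈ cyclePairs L, s(p.1, p.2) ∈ G.E

/-- The union of the closed edge segments of a cycle. -/
def cycleBody (L : List Pt) : Set Pt := ⋃ p ∈ cyclePairs L, segment ℝ p.1 p.2

/-- A star-shaped polygon in `G`: a cycle for which some point `o` sees the boundary
in exactly one point along every ray emanating from `o`. -/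
def IsStarShapedPolygon (G : PSLG) (L : List Pt) : Prop :=
  IsCycleIn G L ∧ ∃ o : Pt, ∀ d : Pt, d ≠ 0 →
    ∃! p : Pt, p ∈ cycleBody L ∧ ∃ t : ℝ, 0 ≤ t ∧ p = o + t • d

/-- The edge set of a cycle, used to count polygons. -/
def cycleEdgeSet (L : List Pt) : Finset (Sym2 Pt) :=
  ((cyclePairs L).map (fun p => s(p.1, p.2))).toFinset

/-- The number of star-shaped polygons in `G`, counted by edge sets. -/
def starCount (G : PSLG) : ℕ :=
  Set.ncard {E' : Finset (Sym2 Pt) | ∃ L, IsStarShapedPolygon G L ∧ E' = cycleEdgeSet L}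

/-- Cross product (signed area). -/
def crossp (a b : Pt) : ℝ := a.1 * b.2 - a.2 * b.1

/-- A convex polygon in `G`: a cycle whose vertices are in strictly convex position and
appear along the cycle in their convex-hull cyclic order; equivalently, for every directed
edge of the cycle all other vertices lie strictly on the same (left or right) side. -/
def IsConvexPolygon (G : PSLG) (L : List Pt) : Prop :=
  IsCycleIn G L ∧
  ((∀ p ∈ cyclePairs L, ∀ v ∈ L, v ≠ p.1 → v ≠ p.2 → 0 < crossp (p.2 - p.1) (v - p.1)) ∨
   (∀ p ∈ cyclePairs L, ∀ v ∈ L, v ≠ p.1 → v ≠ p.2 → crossp (p.2 - p.1) (v - p.1) < 0))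

/-- The number of convex polygons in `G`, counted by edge sets. -/
def convexCount (G : PSLG) : ℕ :=
  Set.ncard {E' : Finset (Sym2 Pt) | ∃ L, IsConvexPolygon G L ∧ E' = cycleEdgeSet L}

/-- A triangulation: an edge-maximal plane straight-line graph. -/
def PSLG.IsTriangulation (G : PSLG) : Prop :=
  ∀ a ∈ G.V, ∀ b ∈ G.V, a ≠ b → s(a, b) ∉ G.E → ¬ ValidEdges G.V (insert s(a, b) G.E)

/-- An orientation of a PSLG: each edge `{a, b}` receives exactly one of the ordered
pairs `(a, b)`, `(b, a)`. -/
def IsOrientation (G : PSLG) (D : Finset (Pt × Pt)) : Prop :=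
  (∀ p ∈ D, s(p.1, p.2) ∈ G.E) ∧
  ∀ a b : Pt, s(a, b) ∈ G.E →
    (((a, b) ∈ D ∧ (b, a) ∉ D) ∨ ((b, a) ∈ D ∧ (a, b) ∉ D))

/-- A directed simple path in a directed graph on points. -/
def IsDirPath (D : Finset (Pt × Pt)) (L : List Pt) : Prop :=
  2 ≤ L.length ∧ L.Nodup ∧ L.Chain' (fun a b => (a, b) ∈ D)

/-- The number of directed simple paths. -/
def dirPathCount (D : Finset (Pt × Pt)) : ℕ := Set.ncard {L : List Pt | IsDirPath D L}

/-- No three of the points of `S` are collinear. -/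
def NoThreeCollinear (S : Finset Pt) : Prop :=
  ∀ p ∈ S, ∀ q ∈ S, ∀ r ∈ S, p ≠ q → p ≠ r → q ≠ r → ¬ Collinear ℝ ({p, q, r} : Set Pt)

/-- A maximal monotone path: not a proper subpath (up to reversal) of another
monotone path of `G`. -/
def IsMaximalMonotonePath (G : PSLG) (L : List Pt) : Prop :=
  IsMonotonePath G L ∧ ∀ M : List Pt, IsMonotonePath G M →
    (L <:+: M ∨ L.reverse <:+: M) → (L = M ∨ L.reverse = M)
/-- The solution of `a k = a (k - 1) + ⋯ + a (k - d k)` on `k ≥ 0`, continued by the powers of `α`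
to negative indices. -/
def windowSeqNat (α : ℝ) (d : ℕ → ℕ) (k : ℕ) : ℝ :=
  ∑ i : Fin (d k), if _h : i.1 < k then windowSeqNat α d (k - 1 - i.1) else α ^ ((k : ℤ) - 1 - i.1)
termination_by k
decreasing_by omega

/-- `windowSeqNat` as a function on `ℤ`. -/
def windowSeq (α : ℝ) (d : ℕ → ℕ) (j : ℤ) : ℝ :=
  if j < 0 then α ^ j else windowSeqNat α d j.toNat

theorem windowSeq_of_neg (α : ℝ) (d : ℕ → ℕ) {j : ℤ} (hj : j < 0) : windowSeq α d j = α ^ j := by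
  simp [windowSeq, hj]

theorem windowSeq_natCast (α : ℝ) (d : ℕ → ℕ) (k : ℕ) :
    windowSeq α d k = ∑ i ∈ Finset.range (d k), windowSeq α d ((k : ℤ) - 1 - i) := by
  rw [windowSeq, if_neg (by omega), Int.toNat_natCast, windowSeqNat, Finset.sum_range]
  refine Finset.sum_congr rfl fun i _ => ?_
  split_ifs with h
  · rw [windowSeq, if_neg (by omega)]
    congr 1
    omega
  · rw [windowSeq, if_pos (by omega)]

section WindowSeq

variable {α : ℝ} {d : ℕ → ℕ}

theorem windowSeq_pos (hα : 1 < α) (hd : ∀ k, 1 ≤ d k) (j : ℤ) : 0 < windowSeq α d j := by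
  have hneg : ∀ j : ℤ, j < 0 → 0 < windowSeq α d j := fun j hj => by
    rw [windowSeq_of_neg _ _ hj]; positivity
  rcases lt_or_ge j 0 with hj | hj
  · exact hneg j hj
  · lift j to ℕ using hj
    induction j using Nat.strong_induction_on with
    | _ k ih =>
      rw [windowSeq_natCast]
      refine Finset.sum_pos (fun i _ => ?_) ⟨0, Finset.mem_range.2 (hd k)⟩
      rcases lt_or_ge ((k : ℤ) - 1 - i) 0 with hj | hj
      · exact hneg _ hj
      · have := ih (k - 1 - i) (by omega)
        rwa [show ((k - 1 - i : ℕ) : ℤ) = (k : ℤ) - 1 - i by omega] at this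

theorem windowSeq_pred_le (hα : 1 < α) (hd : ∀ k, 1 ≤ d k) (j : ℤ) :
    windowSeq α d (j - 1) ≤ windowSeq α d j := by
  rcases lt_or_ge j 0 with hj | hj
  · rw [windowSeq_of_neg _ _ hj, windowSeq_of_neg _ _ (by omega)]
    exact zpow_le_zpow_right₀ hα.le (by omega)
  · lift j to ℕ using hj
    rw [windowSeq_natCast]
    have := Finset.single_le_sum (f := fun i : ℕ => windowSeq α d ((j : ℤ) - 1 - i))
      (fun i _ => (windowSeq_pos hα hd _).le) (Finset.mem_range.2 (hd j))
    simpa using this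

theorem windowSeq_mono (hα : 1 < α) (hd : ∀ k, 1 ≤ d k) : Monotone (windowSeq α d) :=
  monotone_int_of_le_succ fun j => by simpa using windowSeq_pred_le hα hd (j + 1)

theorem tribonacci_root_lt_two (hα : 1 < α) (h3 : α ^ 3 = α ^ 2 + α + 1) : α < 2 := by
  by_contra! h
  nlinarith [mul_self_nonneg (α - 2), mul_nonneg (sub_nonneg.2 h) (sq_nonneg α),
    mul_nonneg (sub_nonneg.2 h) (sub_nonneg.2 hα.le)]

theorem tribonacci_zpow (hα : 1 < α) (h3 : α ^ 3 = α ^ 2 + α + 1) (j : ℤ) :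
    α ^ j = α ^ (j - 1) + α ^ (j - 2) + α ^ (j - 3) := by
  have h0 : α ≠ 0 := by positivity
  have e : ∀ m : ℤ, α ^ (j - 3 + m) = α ^ (j - 3) * α ^ m := fun m => zpow_add₀ h0 _ _
  have e3 := e 3
  have e2 := e 2
  have e1 := e 1
  rw [show j - 3 + 3 = j by ring] at e3
  rw [show j - 3 + 2 = j - 1 by ring] at e2
  rw [show j - 3 + 1 = j - 2 by ring] at e1
  rw [e3, e2, e1, show α ^ (3 : ℤ) = α ^ 3 from mod_cast zpow_natCast α 3, h3,
    show α ^ (2 : ℤ) = α ^ 2 from mod_cast zpow_natCast α 2, zpow_one]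
  ring

/-- Windows of length at most three give at most the powers of the tribonacci root. -/
theorem windowSeq_le_zpow (hα : 1 < α) (h3 : α ^ 3 = α ^ 2 + α + 1) {n : ℕ}
    (hd : ∀ k < n, d k ≤ 3) (j : ℤ) (hj : j < n) : windowSeq α d j ≤ α ^ j := by
  rcases lt_or_ge j 0 with hj0 | hj0
  · rw [windowSeq_of_neg _ _ hj0]
  · lift j to ℕ using hj0
    induction j using Nat.strong_induction_on with
    | _ k ih =>
      have hb : ∀ i : ℕ, windowSeq α d ((k : ℤ) - 1 - i) ≤ α ^ ((k : ℤ) - 1 - i) := fun i => by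
        rcases lt_or_ge ((k : ℤ) - 1 - i) 0 with h | h
        · rw [windowSeq_of_neg _ _ h]
        · have := ih (k - 1 - i) (by omega) (by omega)
          rwa [show ((k - 1 - i : ℕ) : ℤ) = (k : ℤ) - 1 - i by omega] at this
      rw [windowSeq_natCast]
      calc _ ≤ ∑ i ∈ Finset.range (d k), α ^ ((k : ℤ) - 1 - i) :=
            Finset.sum_le_sum fun i _ => hb i
        _ ≤ ∑ i ∈ Finset.range 3, α ^ ((k : ℤ) - 1 - i) :=
            Finset.sum_le_sum_of_subset_of_nonneg
              (Finset.range_subset_range.2 (hd k (by omega))) fun i _ _ => by positivity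
        _ = _ := by
            rw [tribonacci_zpow hα h3 k]
            simp [Finset.sum_range_succ]
            ring_nf

theorem windowSeq_le_two_mul (hα : 1 < α) (h3 : α ^ 3 = α ^ 2 + α + 1) (hd : ∀ k, 1 ≤ d k)
    {n : ℕ} (hd3 : ∀ k < n, d k ≤ 3) (hasc : ∀ k, k + 1 < n → d (k + 1) ≤ d k + 1)
    (j : ℤ) (hj : j < n) : windowSeq α d j ≤ 2 * windowSeq α d (j - 1) := by
  have h0 : (0 : ℝ) < α := by positivity
  have h2 := tribonacci_root_lt_two hα h3
  have hneg : ∀ j : ℤ, j ≤ 0 → α ^ j ≤ 2 * windowSeq α d (j - 1) := fun j hj => by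
    rw [windowSeq_of_neg _ _ (by omega), zpow_sub_one₀ h0.ne']
    have : 0 < α ^ j := by positivity
    rw [← div_eq_mul_inv, ← mul_div_assoc, le_div_iff₀ h0]
    nlinarith
  rcases le_or_gt j 0 with hj0 | hj0
  · exact (windowSeq_le_zpow hα h3 hd3 j hj).trans (hneg j hj0)
  · lift j to ℕ using hj0.le
    obtain ⟨k, rfl⟩ : ∃ k, j = k + 1 := ⟨j - 1, by omega⟩
    have hk3 := hd3 (k + 1) (by omega)
    have hk1 := hd (k + 1)
    have hk := hasc k (by omega)
    have hmono := windowSeq_pred_le hα hd (k : ℤ)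
    have hpos := fun j => windowSeq_pos hα hd j
    rw [windowSeq_natCast]
    have e : (((k + 1 : ℕ) : ℤ) - 1) = k := by push_cast; ring
    rw [e]
    by_cases h : d (k + 1) = 3
    · rw [h]
      have : ∑ i ∈ Finset.range 2, windowSeq α d ((k : ℤ) - 1 - i) ≤ windowSeq α d k := by
        rw [windowSeq_natCast α d k]
        exact Finset.sum_le_sum_of_subset_of_nonneg
          (Finset.range_subset_range.2 (by omega)) fun i _ _ => (hpos _).le
      simp only [Finset.sum_range_succ, Finset.sum_range_zero] at this ⊢
      push_cast at this ⊢
      rw [show (k : ℤ) - 2 = k - 1 - 1 by ring, show (k : ℤ) - 0 = k by ring]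
      rw [show (k : ℤ) - 1 - 0 = k - 1 by ring] at this
      linarith
    · have : ∑ i ∈ Finset.range (d (k + 1)), windowSeq α d ((k : ℤ) - i) ≤
          ∑ i ∈ Finset.range 2, windowSeq α d ((k : ℤ) - i) :=
        Finset.sum_le_sum_of_subset_of_nonneg
          (Finset.range_subset_range.2 (by omega)) fun i _ _ => (hpos _).le
      refine this.trans ?_
      simp only [Finset.sum_range_succ, Finset.sum_range_zero]
      push_cast
      rw [show (k : ℤ) - 0 = k by ring]
      linarith

/-- Move one unit of `d` from index `q` to index `p`. -/
def shiftUnit (d : ℕ → ℕ) (p q : ℕ) (k : ℕ) : ℕ :=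
  if k = p then d p + 1 else if k = q then d q - 1 else d k

theorem windowSeq_shiftUnit_of_lt {p q : ℕ} (hpq : p < q) (j : ℤ) (hj : j < p) :
    windowSeq α (shiftUnit d p q) j = windowSeq α d j := by
  rcases lt_or_ge j 0 with hj0 | hj0
  · rw [windowSeq_of_neg _ _ hj0, windowSeq_of_neg _ _ hj0]
  · lift j to ℕ using hj0
    induction j using Nat.strong_induction_on with
    | _ k ih =>
      rw [windowSeq_natCast, windowSeq_natCast]
      have : shiftUnit d p q k = d k := by
        rw [shiftUnit, if_neg (by omega), if_neg (by omega)]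
      rw [this]
      refine Finset.sum_congr rfl fun i _ => ?_
      rcases lt_or_ge ((k : ℤ) - 1 - i) 0 with h | h
      · rw [windowSeq_of_neg _ _ h, windowSeq_of_neg _ _ h]
      · have := ih (k - 1 - i) (by omega) (by omega)
        rwa [show ((k - 1 - i : ℕ) : ℤ) = (k : ℤ) - 1 - i by omega] at this

theorem windowSeq_shiftUnit_self {p q : ℕ} (hpq : p < q) :
    windowSeq α (shiftUnit d p q) p = windowSeq α d p + windowSeq α d ((p : ℤ) - 1 - d p) := by
  rw [windowSeq_natCast, windowSeq_natCast α d p]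
  have : shiftUnit d p q p = d p + 1 := by simp [shiftUnit]
  rw [this, Finset.sum_range_succ, windowSeq_shiftUnit_of_lt hpq _ (by omega)]
  congr 1
  exact Finset.sum_congr rfl fun i _ => windowSeq_shiftUnit_of_lt hpq _ (by omega)

theorem windowSeq_le_shiftUnit {p q : ℕ} (hpq : p < q)
    (h : ∀ j : ℕ, p ≤ j → j ≤ q → windowSeq α d j ≤ windowSeq α (shiftUnit d p q) j) (j : ℤ) :
    windowSeq α d j ≤ windowSeq α (shiftUnit d p q) j := by
  rcases lt_or_ge j p with hj | hj
  · rw [windowSeq_shiftUnit_of_lt hpq j hj]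
  · lift j to ℕ using by omega
    induction j using Nat.strong_induction_on with
    | _ k ih =>
      rcases le_or_gt k q with hk | hk
      · exact h k (by omega) hk
      · rw [windowSeq_natCast, windowSeq_natCast]
        have : shiftUnit d p q k = d k := by
          rw [shiftUnit, if_neg (by omega), if_neg (by omega)]
        rw [this]
        refine Finset.sum_le_sum fun i _ => ?_
        rcases lt_or_ge ((k : ℤ) - 1 - i) p with h' | h'
        · rw [windowSeq_shiftUnit_of_lt hpq _ h']
        · have := ih (k - 1 - i) (by omega) (by omega)
          rwa [show ((k - 1 - i : ℕ) : ℤ) = (k : ℤ) - 1 - i by omega] at this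

/-- The shift does not decrease the sequence across an ascent of at least two. -/
theorem windowSeq_le_shiftUnit_succ (hα : 1 < α) (hd : ∀ k, 1 ≤ d k) {p : ℕ}
    (hp : d p + 2 ≤ d (p + 1)) (j : ℤ) :
    windowSeq α d j ≤ windowSeq α (shiftUnit d p (p + 1)) j := by
  refine windowSeq_le_shiftUnit (Nat.lt_add_one p) (fun j hj hj' => ?_) j
  have hself := windowSeq_shiftUnit_self (α := α) (d := d) (Nat.lt_add_one p)
  rcases (by omega : j = p ∨ j = p + 1) with rfl | rfl
  · rw [hself]
    exact le_add_of_nonneg_right (windowSeq_pos hα hd _).le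
  · rw [windowSeq_natCast, windowSeq_natCast]
    have : shiftUnit d p (p + 1) (p + 1) = d (p + 1) - 1 := by simp [shiftUnit]
    rw [this]
    obtain ⟨e, he⟩ : ∃ e, d (p + 1) = e + 2 := ⟨d (p + 1) - 2, by omega⟩
    rw [he, show e + 2 - 1 = e + 1 by omega, Finset.sum_range_succ',
      Finset.sum_range_succ _ e, Finset.sum_range_succ' _ e]
    have e0 : ((p + 1 : ℕ) : ℤ) - 1 - (0 : ℕ) = p := by push_cast; ring
    rw [e0, hself]
    have hs : ∀ i : ℕ, windowSeq α (shiftUnit d p (p + 1)) (((p + 1 : ℕ) : ℤ) - 1 - (i + 1 : ℕ)) =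
        windowSeq α d (((p + 1 : ℕ) : ℤ) - 1 - (i + 1 : ℕ)) := fun i =>
      windowSeq_shiftUnit_of_lt (Nat.lt_add_one p) _ (by push_cast; omega)
    rw [Finset.sum_congr rfl fun i _ => hs i]
    have := windowSeq_mono hα hd
      (show ((p + 1 : ℕ) : ℤ) - 1 - (e + 1 : ℕ) ≤ (p : ℤ) - 1 - d p by push_cast; omega)
    linarith

/-- The tribonacci sequence `1, 1, 2, 4, 7, …`, extended by zero to negative indices. -/
def trib : ℕ → ℕ
  | 0 => 1
  | 1 => 1
  | 2 => 2
  | k + 3 => trib k + trib (k + 1) + trib (k + 2)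

/-- The shift does not decrease the sequence when only windows of length three lie between. -/
theorem windowSeq_le_shiftUnit_of_three (hα : 1 < α) (hd : ∀ k, 1 ≤ d k) {p q : ℕ} (hpq : p < q)
    (hp : d p ≤ 2) (hq : 4 ≤ d q) (hmid : ∀ k, p < k → k < q → d k = 3)
    (htwo : ∀ j : ℤ, j < p → windowSeq α d j ≤ 2 * windowSeq α d (j - 1)) (j : ℤ) :
    windowSeq α d j ≤ windowSeq α (shiftUnit d p q) j := by
  set x := windowSeq α d ((p : ℤ) - 1 - d p) with hx
  have hmono := windowSeq_mono hα hd
  have hxpos : 0 < x := windowSeq_pos hα hd _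
  have hself := windowSeq_shiftUnit_self (α := α) (d := d) hpq
  have three : ∀ (e : ℕ → ℕ) (k : ℕ), e k = 3 → windowSeq α e k =
      windowSeq α e ((k : ℤ) - 1) + windowSeq α e ((k : ℤ) - 2) + windowSeq α e ((k : ℤ) - 3) := by
    intro e k hk
    rw [windowSeq_natCast, hk]
    simp only [Finset.sum_range_succ, Finset.sum_range_zero]
    push_cast
    ring_nf
  have gain : ∀ i : ℕ, p + i < q →
      windowSeq α d (p + i : ℕ) + x * trib i ≤ windowSeq α (shiftUnit d p q) (p + i : ℕ) := by
    intro i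
    induction i using Nat.strong_induction_on with
    | _ i ih =>
      intro hi
      rcases Nat.eq_zero_or_pos i with rfl | hi0
      · simp [hself, trib, hx]
      · have hk : d (p + i) = 3 := hmid (p + i) (by omega) hi
        have hk' : shiftUnit d p q (p + i) = 3 := by
          rw [shiftUnit, if_neg (by omega), if_neg (by omega), hk]
        rw [three _ _ hk, three _ _ hk']
        have before : ∀ j : ℤ, j < p →
            windowSeq α (shiftUnit d p q) j = windowSeq α d j :=
          windowSeq_shiftUnit_of_lt hpq
        rcases (by omega : i = 1 ∨ i = 2 ∨ 3 ≤ i) with rfl | rfl | hi3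
        · have h0 := ih 0 (by omega) (by omega)
          rw [before ((p + 1 : ℕ) - 2) (by push_cast; omega),
            before ((p + 1 : ℕ) - 3) (by push_cast; omega)]
          simp only [trib, add_zero, Nat.cast_one] at h0 ⊢
          push_cast at h0 ⊢
          rw [show (p : ℤ) + 1 - 1 = p by ring]
          linarith
        · have h0 := ih 0 (by omega) (by omega)
          have h1 := ih 1 (by omega) (by omega)
          rw [before ((p + 2 : ℕ) - 3) (by push_cast; omega)]
          simp only [trib, add_zero] at h0 h1 ⊢
          push_cast at h0 h1 ⊢
          rw [show (p : ℤ) + 2 - 1 = p + 1 by ring, show (p : ℤ) + 2 - 2 = p by ring]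
          linarith
        · obtain ⟨l, rfl⟩ := Nat.exists_eq_add_of_le' hi3
          have h0 := ih l (by omega) (by omega)
          have h1 := ih (l + 1) (by omega) (by omega)
          have h2 := ih (l + 2) (by omega) (by omega)
          simp only [trib]
          push_cast at h0 h1 h2 ⊢
          rw [show (p : ℤ) + (l + 3) - 1 = p + (l + 2) by ring,
            show (p : ℤ) + (l + 3) - 2 = p + (l + 1) by ring,
            show (p : ℤ) + (l + 3) - 3 = p + l by ring]
          linarith
  have loss : ∀ i : ℕ, p + i < q + 3 → windowSeq α d ((p : ℤ) - 3 + i) ≤ x * trib (i + 1) := by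
    have l0 : windowSeq α d ((p : ℤ) - 3) ≤ x := hmono (by omega)
    have l1 : windowSeq α d ((p : ℤ) - 2) ≤ 2 * x := by
      have := htwo ((p : ℤ) - 2) (by omega)
      rw [show (p : ℤ) - 2 - 1 = p - 3 by ring] at this
      linarith
    have l2 : windowSeq α d ((p : ℤ) - 1) ≤ 4 * x := by
      have := htwo ((p : ℤ) - 1) (by omega)
      rw [show (p : ℤ) - 1 - 1 = p - 2 by ring] at this
      linarith
    have l3 : windowSeq α d (p : ℤ) ≤ 7 * x := by
      rw [windowSeq_natCast]
      calc _ ≤ ∑ i ∈ Finset.range 2, windowSeq α d ((p : ℤ) - 1 - i) :=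
            Finset.sum_le_sum_of_subset_of_nonneg
              (Finset.range_subset_range.2 hp) fun i _ _ => (windowSeq_pos hα hd _).le
        _ ≤ _ := by
          simp only [Finset.sum_range_succ, Finset.sum_range_zero]
          push_cast
          rw [show (p : ℤ) - 1 - 0 = p - 1 by ring, show (p : ℤ) - 1 - 1 = p - 2 by ring]
          linarith
    intro i
    induction i using Nat.strong_induction_on with
    | _ i ih =>
      intro hi
      rcases (by omega : i = 0 ∨ i = 1 ∨ i = 2 ∨ i = 3 ∨ 4 ≤ i) with
        rfl | rfl | rfl | rfl | hi4
      · simpa [trib] using l0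
      · simp only [trib]
        push_cast
        rw [show (p : ℤ) - 3 + 1 = p - 2 by ring]
        linarith
      · simp only [trib]
        push_cast
        rw [show (p : ℤ) - 3 + 2 = p - 1 by ring]
        linarith
      · simp only [trib]
        push_cast
        rw [show (p : ℤ) - 3 + 3 = p by ring]
        linarith
      · obtain ⟨l, rfl⟩ := Nat.exists_eq_add_of_le' hi4
        have h1 := ih (l + 1) (by omega) (by omega)
        have h2 := ih (l + 2) (by omega) (by omega)
        have h3 := ih (l + 3) (by omega) (by omega)
        have hk := three d (p + (l + 1)) (hmid (p + (l + 1)) (by omega) (by omega))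
        rw [show l + 4 + 1 = (l + 2) + 3 by ring, trib]
        push_cast at h1 h2 h3 hk ⊢
        rw [show (p : ℤ) - 3 + (l + 4) = p + (l + 1) by ring, hk]
        rw [show (p : ℤ) + (l + 1) - 1 = p - 3 + (l + 3) by ring,
          show (p : ℤ) + (l + 1) - 2 = p - 3 + (l + 2) by ring,
          show (p : ℤ) + (l + 1) - 3 = p - 3 + (l + 1) by ring]
        rw [show l + 2 + 1 = l + 1 + 1 + 1 by ring, show l + 2 + 2 = l + 3 + 1 by ring]
        rw [show l + 2 + 1 = l + 1 + 1 + 1 by ring] at h2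
        linarith
  have mid : ∀ j : ℕ, j < q → windowSeq α d j ≤ windowSeq α (shiftUnit d p q) j := by
    intro j hj
    rcases lt_or_ge j p with h | h
    · rw [windowSeq_shiftUnit_of_lt hpq _ (by omega)]
    · have := gain (j - p) (by omega)
      rw [show p + (j - p) = j by omega] at this
      have : 0 ≤ x * trib (j - p) := by positivity
      linarith
  have mid' : ∀ j : ℤ, j < q → windowSeq α d j ≤ windowSeq α (shiftUnit d p q) j := by
    intro j hj
    rcases lt_or_ge j p with h | h
    · rw [windowSeq_shiftUnit_of_lt hpq _ h]
    · lift j to ℕ using by omega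
      exact mid j (by omega)
  refine windowSeq_le_shiftUnit hpq (fun j _ hj => ?_) j
  rcases hj.lt_or_eq with hj | rfl
  · exact mid j hj
  · obtain ⟨m, rfl⟩ : ∃ m, j = p + (m + 1) := ⟨j - p - 1, by omega⟩
    set q := p + (m + 1) with hqdef
    obtain ⟨r, hr⟩ : ∃ r, d q = r + 4 := ⟨d q - 4, by omega⟩
    have hsq : shiftUnit d p q q = r + 3 := by
      rw [shiftUnit, if_neg (by omega), if_pos rfl, hr]; omega
    rw [windowSeq_natCast, windowSeq_natCast, hr, hsq, Finset.sum_range_succ]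
    have hl := loss m (by omega)
    have hle : windowSeq α d ((q : ℤ) - 1 - (r + 3 : ℕ)) ≤ x * trib (m + 1) :=
      (hmono (show (q : ℤ) - 1 - (r + 3 : ℕ) ≤ (p : ℤ) - 3 + m by push_cast; omega)).trans hl
    have hrest : ∑ i ∈ Finset.range r, windowSeq α d ((q : ℤ) - 1 - (3 + i : ℕ)) ≤
        ∑ i ∈ Finset.range r, windowSeq α (shiftUnit d p q) ((q : ℤ) - 1 - (3 + i : ℕ)) :=
      Finset.sum_le_sum fun i _ => mid' _ (by push_cast; omega)
    rw [add_comm r 3, Finset.sum_range_add, Finset.sum_range_add]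
    have hfirst : ∑ i ∈ Finset.range 3, windowSeq α d ((q : ℤ) - 1 - i) + x * trib (m + 1) ≤
        ∑ i ∈ Finset.range 3, windowSeq α (shiftUnit d p q) ((q : ℤ) - 1 - i) := by
      simp only [Finset.sum_range_succ, Finset.sum_range_zero]
      have a1 := mid' ((q : ℤ) - 1 - (1 : ℕ)) (by omega)
      have a2 := mid' ((q : ℤ) - 1 - (2 : ℕ)) (by omega)
      rcases (by omega : m = 0 ∨ m = 1 ∨ 2 ≤ m) with rfl | rfl | hm2
      · have g0 := gain 0 (by omega)
        rw [show ((p + 0 : ℕ) : ℤ) = (q : ℤ) - 1 - (0 : ℕ) by rw [hqdef]; push_cast; ring] at g0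
        simp only [trib] at g0 ⊢
        linarith
      · have g0 := gain 0 (by omega)
        have g1 := gain 1 (by omega)
        rw [show ((p + 0 : ℕ) : ℤ) = (q : ℤ) - 1 - (1 : ℕ) by rw [hqdef]; push_cast; ring] at g0
        rw [show ((p + 1 : ℕ) : ℤ) = (q : ℤ) - 1 - (0 : ℕ) by rw [hqdef]; push_cast; ring] at g1
        simp only [trib] at g0 g1 ⊢
        push_cast at g0 g1 a1 a2 ⊢
        linarith
      · obtain ⟨l, rfl⟩ := Nat.exists_eq_add_of_le' hm2
        have g0 := gain l (by omega)
        have g1 := gain (l + 1) (by omega)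
        have g2 := gain (l + 2) (by omega)
        rw [show ((p + l : ℕ) : ℤ) = (q : ℤ) - 1 - (2 : ℕ) by rw [hqdef]; push_cast; ring] at g0
        rw [show ((p + (l + 1) : ℕ) : ℤ) = (q : ℤ) - 1 - (1 : ℕ) by
          rw [hqdef]; push_cast; ring] at g1
        rw [show ((p + (l + 2) : ℕ) : ℤ) = (q : ℤ) - 1 - (0 : ℕ) by
          rw [hqdef]; push_cast; ring] at g2
        rw [show l + 2 + 1 = l + 3 by ring, trib]
        push_cast at g0 g1 g2 a1 a2 ⊢
        linarith
    rw [add_comm 3 r]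
    linarith

theorem sum_shiftUnit_le {p q k : ℕ} :
    ∑ i ∈ Finset.range k, shiftUnit d p q i ≤ ∑ i ∈ Finset.range k, d i + 1 := by
  calc _ ≤ ∑ i ∈ Finset.range k, (d i + if i = p then 1 else 0) := by
        refine Finset.sum_le_sum fun i hi => ?_
        have := Finset.mem_range.1 hi
        rw [shiftUnit]
        split_ifs <;> simp_all
    _ ≤ _ := by
        rw [Finset.sum_add_distrib, Finset.sum_ite_eq']
        split_ifs <;> omega

theorem sum_shiftUnit_of_lt {p q k : ℕ} (hpq : p < q) (hk : q < k)
    (g : ℕ → ℕ) :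
    ∑ i ∈ Finset.range k, g (shiftUnit d p q i) + (g (d p) + g (d q)) =
      ∑ i ∈ Finset.range k, g (d i) + (g (d p + 1) + g (d q - 1)) := by
  have hp : p ∈ Finset.range k := Finset.mem_range.2 (by omega)
  have hq' : q ∈ (Finset.range k).erase p := Finset.mem_erase.2 ⟨by omega, Finset.mem_range.2 hk⟩
  rw [← Finset.add_sum_erase _ _ hp, ← Finset.add_sum_erase _ _ hq',
    ← Finset.add_sum_erase _ (fun i => g (d i)) hp,
    ← Finset.add_sum_erase _ (fun i => g (d i)) hq']
  have : ∑ i ∈ ((Finset.range k).erase p).erase q, g (shiftUnit d p q i) =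
      ∑ i ∈ ((Finset.range k).erase p).erase q, g (d i) := by
    refine Finset.sum_congr rfl fun i hi => ?_
    simp only [Finset.mem_erase] at hi
    rw [shiftUnit, if_neg hi.2.1, if_neg hi.1]
  rw [this]
  simp only [shiftUnit, if_true, if_neg (show q ≠ p by omega)]
  omega

/-- If the windows have average length at most three on every initial segment, then the sequence
is bounded by the powers of the tribonacci root. -/
theorem windowSeq_le_pow (hα : 1 < α) (h3 : α ^ 3 = α ^ 2 + α + 1) (n : ℕ) (d : ℕ → ℕ)
    (hd : ∀ k, 1 ≤ d k) (hsum : ∀ k ≤ n, ∑ i ∈ Finset.range k, d i ≤ 3 * k) (j : ℕ) (hj : j < n) :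
    windowSeq α d j ≤ α ^ j := by
  induction hM : ∑ i ∈ Finset.range n, d i ^ 2 using Nat.strong_induction_on generalizing d with
  | _ M ih =>
    by_cases hle : ∀ k < n, d k ≤ 3
    · simpa using windowSeq_le_zpow hα h3 hle j (by omega)
    push Not at hle
    have slack : ∀ (q p : ℕ), q < n → (∀ k < q, d k ≤ 3) → p < q → d p ≤ 2 →
        ∀ k, p < k → k ≤ q → ∑ i ∈ Finset.range k, d i + 1 ≤ 3 * k := by
      intro q p hqn hq hpq hp k hpk hkq
      have : ∑ i ∈ Finset.range k, (d i + if i = p then 1 else 0) ≤ ∑ i ∈ Finset.range k, 3 := by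
        refine Finset.sum_le_sum fun i hi => ?_
        have := hq i (by have := Finset.mem_range.1 hi; omega)
        split_ifs with h
        · subst h; omega
        · omega
      rw [Finset.sum_add_distrib, Finset.sum_ite_eq', if_pos (Finset.mem_range.2 hpk)] at this
      simpa [mul_comm] using this
    have exchange : ∀ p q : ℕ, p < q → q < n → d p + 2 ≤ d q → d p ≤ 2 → (∀ k < q, d k ≤ 3) →
        (∀ j : ℤ, windowSeq α d j ≤ windowSeq α (shiftUnit d p q) j) →
        windowSeq α d j ≤ α ^ j := by
      intro p q hpq hqn hdd hp hq hmon
      refine (hmon j).trans (ih _ ?_ (shiftUnit d p q) ?_ ?_ rfl)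
      · have := sum_shiftUnit_of_lt (d := d) hpq hqn (fun x => x ^ 2)
        obtain ⟨r, hr⟩ : ∃ r, d q = d p + 2 + r := ⟨d q - (d p + 2), by omega⟩
        rw [hr, show d p + 2 + r - 1 = d p + 1 + r by omega] at this
        nlinarith
      · intro k
        rw [shiftUnit]
        split_ifs
        · omega
        · omega
        · exact hd k
      · intro k hk
        rcases le_or_gt k q with hkq | hkq
        · rcases le_or_gt k p with hkp | hkp
          · have : ∑ i ∈ Finset.range k, shiftUnit d p q i = ∑ i ∈ Finset.range k, d i :=
              Finset.sum_congr rfl fun i hi => by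
                have := Finset.mem_range.1 hi
                rw [shiftUnit, if_neg (by omega), if_neg (by omega)]
            rw [this]
            exact hsum k hk
          · exact (sum_shiftUnit_le).trans (slack q p hqn hq hpq hp k hkp hkq)
        · have := sum_shiftUnit_of_lt (d := d) hpq hkq (fun x => x)
          have := hsum k hk
          have := hd q
          omega
    classical
    set q := Nat.find hle with hqdef
    obtain ⟨hqn, hq4⟩ : q < n ∧ 3 < d q := Nat.find_spec hle
    have hq : ∀ k < q, d k ≤ 3 := fun k hk => by
      have := Nat.find_min hle hk
      push Not at this
      exact this (by omega)
    by_cases hasc : ∀ k, k + 1 < q → d (k + 1) ≤ d k + 1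
    · obtain ⟨p, ⟨hpq, hp⟩, hmax⟩ : ∃ p, (p < q ∧ d p ≤ 2) ∧ ∀ k, p < k → k < q → d k = 3 := by
        have hne : ((Finset.range q).filter fun p => d p ≤ 2).Nonempty := by
          by_contra hemp
          rw [Finset.not_nonempty_iff_eq_empty, Finset.filter_eq_empty_iff] at hemp
          have hs := hsum (q + 1) (by omega)
          have : ∑ i ∈ Finset.range q, 3 ≤ ∑ i ∈ Finset.range q, d i :=
            Finset.sum_le_sum fun i hi => by have := hemp hi; omega
          rw [Finset.sum_range_succ] at hs
          simp at this
          omega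
        refine ⟨Finset.max' _ hne, ?_, fun k hk hkq => ?_⟩
        · simpa using Finset.max'_mem _ hne
        · have := hq k hkq
          by_contra h
          have := Finset.le_max' ((Finset.range q).filter fun p => d p ≤ 2) k
            (by simp; omega)
          omega
      exact exchange p q hpq hqn (by omega) hp hq
        (windowSeq_le_shiftUnit_of_three hα hd hpq hp hq4 hmax fun j hj =>
          windowSeq_le_two_mul hα h3 hd hq hasc j (by omega))
    · push Not at hasc
      obtain ⟨k, hk, hk'⟩ := hasc
      have := hq (k + 1) hk
      exact exchange k (k + 1) (by omega) (by omega) (by omega) (by omega)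
        (fun i hi => hq i (by omega)) (windowSeq_le_shiftUnit_succ hα hd (by omega))

end WindowSeq
/-- A plane drawing of a finite directed graph in which every arc runs from left to right and is
the graph of a continuous function over the interval spanned by its endpoints. -/
structure MonotoneDrawing (ι : Type*) where
  V : Finset ι
  pos : ι → ℝ
  height : ι → ℝ
  Adj : ι → ι → Prop
  curve : ι → ι → ℝ → ℝ
  left_mem : ∀ {u v}, Adj u v → u ∈ V
  right_mem : ∀ {u v}, Adj u v → v ∈ V
  pos_injOn : Set.InjOn pos V
  pos_lt : ∀ {u v}, Adj u v → pos u < pos v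
  continuous_curve : ∀ {u v}, Adj u v → Continuous (curve u v)
  curve_left : ∀ {u v}, Adj u v → curve u v (pos u) = height u
  curve_right : ∀ {u v}, Adj u v → curve u v (pos v) = height v
  curve_ne_height : ∀ {u v w}, Adj u v → w ∈ V → pos u < pos w → pos w < pos v →
    curve u v (pos w) ≠ height w
  eq_or_of_curve_eq : ∀ {u v u' v' t}, Adj u v → Adj u' v' → pos u ≤ t → t ≤ pos v →
    pos u' ≤ t → t ≤ pos v' → curve u v t = curve u' v' t →
    (u = u' ∧ v = v') ∨ ∃ w, t = pos w ∧ (w = u ∨ w = v) ∧ (w = u' ∨ w = v')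

namespace MonotoneDrawing

variable {ι : Type*} (D : MonotoneDrawing ι)

open scoped Classical in
/-- The out-neighbours of a vertex. -/
def out (u : ι) : Finset ι := D.V.filter (D.Adj u)

theorem mem_out {u v : ι} : v ∈ D.out u ↔ D.Adj u v := by
  simpa [out] using fun h => D.right_mem h

/-- The leftmost position of an out-neighbour. -/
def firstPos (u : ι) : ℝ := if h : (D.out u).Nonempty then (D.out u).inf' h D.pos else 0

theorem lt_firstPos {u v : ι} (h : D.Adj u v) : D.pos u < D.firstPos u := by
  have hne : (D.out u).Nonempty := ⟨v, D.mem_out.2 h⟩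
  rw [firstPos, dif_pos hne, Finset.lt_inf'_iff]
  exact fun w hw => D.pos_lt (D.mem_out.1 hw)

theorem firstPos_le {u v : ι} (h : D.Adj u v) : D.firstPos u ≤ D.pos v := by
  have hne : (D.out u).Nonempty := ⟨v, D.mem_out.2 h⟩
  rw [firstPos, dif_pos hne]
  exact Finset.inf'_le _ (D.mem_out.2 h)

/-- The height of an arc shortly after its left endpoint; it orders the arcs leaving `u`. -/
def key (u v : ι) : ℝ := D.curve u v (D.firstPos u)

variable {D}

theorem eq_of_curve_eq {u v u' v' : ι} {t : ℝ} (h : D.Adj u v) (h' : D.Adj u' v')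
    (h1 : D.pos u < t) (h2 : t ≤ D.pos v) (h1' : D.pos u' < t) (h2' : t ≤ D.pos v')
    (heq : D.curve u v t = D.curve u' v' t) : v = v' ∧ (u = u' ∨ t = D.pos v) := by
  rcases D.eq_or_of_curve_eq h h' h1.le h2 h1'.le h2' heq with ⟨h, h'⟩ | ⟨w, rfl, hw, hw'⟩
  · exact ⟨h', .inl h⟩
  · rcases hw with rfl | rfl
    · exact absurd h1 (lt_irrefl _)
    · rcases hw' with rfl | rfl
      · exact absurd h1' (lt_irrefl _)
      · exact ⟨rfl, .inr rfl⟩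

theorem curve_lt_of_curve_lt {u v v' : ι} (h : D.Adj u v) (h' : D.Adj u v') {x t : ℝ}
    (hx : D.pos u < x) (hxv : x ≤ D.pos v) (hxv' : x ≤ D.pos v')
    (ht : D.pos u < t) (htv : t ≤ D.pos v) (htv' : t ≤ D.pos v')
    (hlt : D.curve u v t < D.curve u v' t) : D.curve u v x < D.curve u v' x := by
  by_contra! hge
  obtain ⟨y, hy, hyeq⟩ := (isPreconnected_Ioc (a := D.pos u) (b := min (D.pos v) (D.pos v'))
    ).intermediate_value₂ (a := t) (b := x) ⟨ht, le_min htv htv'⟩ ⟨hx, le_min hxv hxv'⟩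
    (D.continuous_curve h).continuousOn (D.continuous_curve h').continuousOn hlt.le hge
  obtain ⟨rfl, -⟩ := eq_of_curve_eq h h' hy.1 (hy.2.trans (min_le_left _ _)) hy.1
    (hy.2.trans (min_le_right _ _)) hyeq
  exact lt_irrefl _ hlt

theorem key_injective {u v v' : ι} (h : D.Adj u v) (h' : D.Adj u v')
    (heq : D.key u v = D.key u v') : v = v' :=
  (eq_of_curve_eq h h' (D.lt_firstPos h) (D.firstPos_le h) (D.lt_firstPos h) (D.firstPos_le h')
    heq).1

theorem curve_lt_of_key_lt {u v v' : ι} (h : D.Adj u v) (h' : D.Adj u v') {x : ℝ}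
    (hx : D.pos u < x) (hxv : x ≤ D.pos v) (hxv' : x ≤ D.pos v')
    (hlt : D.key u v < D.key u v') : D.curve u v x < D.curve u v' x :=
  curve_lt_of_curve_lt h h' hx hxv hxv' (D.lt_firstPos h) (D.firstPos_le h) (D.firstPos_le h') hlt

theorem key_lt_of_curve_lt {u v v' : ι} (h : D.Adj u v) (h' : D.Adj u v') {x : ℝ}
    (hx : D.pos u < x) (hxv : x ≤ D.pos v) (hxv' : x ≤ D.pos v')
    (hlt : D.curve u v x < D.curve u v' x) : D.key u v < D.key u v' :=
  curve_lt_of_curve_lt h h' (D.lt_firstPos h) (D.firstPos_le h) (D.firstPos_le h') hx hxv hxv' hlt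

variable (D)

/-- Two arcs leaving `u`, the second one next above the first one. -/
structure Wedge (u v v' : ι) : Prop where
  lower : D.Adj u v
  upper : D.Adj u v'
  key_lt : D.key u v < D.key u v'
  not_between : ∀ y, D.Adj u y → D.key u v < D.key u y → ¬ D.key u y < D.key u v'

/-- The vertex `w` lies in the closed triangle spanned by two arcs leaving `u`, cut off at the
first right endpoint. -/
structure InWedge (u v v' w : ι) : Prop where
  mem : w ∈ D.V
  pos_lt : D.pos u < D.pos w
  le_lower : D.pos w ≤ D.pos v
  le_upper : D.pos w ≤ D.pos v'
  lower_le : D.curve u v (D.pos w) ≤ D.height w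
  le_curve : D.height w ≤ D.curve u v' (D.pos w)

/-- The vertex `w` is the leftmost one in the triangle of a wedge. -/
structure IsTip (u v v' w : ι) : Prop extends D.InWedge u v v' w where
  le_pos : ∀ y, D.InWedge u v v' y → D.pos w ≤ D.pos y

variable {D}

theorem Wedge.exists_isTip {u v v' : ι} (h : D.Wedge u v v') : ∃ w, D.IsTip u v v' w := by
  classical
  have hne : (D.V.filter fun w => D.InWedge u v v' w).Nonempty := by
    rcases le_total (D.pos v) (D.pos v') with hv | hv
    · refine ⟨v, Finset.mem_filter.2 ⟨D.right_mem h.lower, D.right_mem h.lower, D.pos_lt h.lower,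
        le_rfl, hv, (D.curve_right h.lower).le, ?_⟩⟩
      rw [← D.curve_right h.lower]
      exact (curve_lt_of_key_lt h.lower h.upper (D.pos_lt h.lower) le_rfl hv h.key_lt).le
    · refine ⟨v', Finset.mem_filter.2 ⟨D.right_mem h.upper, D.right_mem h.upper, D.pos_lt h.upper,
        hv, le_rfl, ?_, (D.curve_right h.upper).ge⟩⟩
      rw [← D.curve_right h.upper]
      exact (curve_lt_of_key_lt h.lower h.upper (D.pos_lt h.upper) hv le_rfl h.key_lt).le
  obtain ⟨w, hw, hmin⟩ := Finset.exists_min_image _ D.pos hne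
  exact ⟨w, (Finset.mem_filter.1 hw).2,
    fun y hy => hmin y (Finset.mem_filter.2 ⟨hy.mem, hy⟩)⟩

theorem IsTip.not_upper_lt {u₁ v₁ v₁' u₂ v₂ v₂' w : ι} (h₁ : D.Wedge u₁ v₁ v₁')
    (t₁ : D.IsTip u₁ v₁ v₁' w) (h₂ : D.Wedge u₂ v₂ v₂') (t₂ : D.IsTip u₂ v₂ v₂' w)
    (a₁ : D.height w < D.curve u₁ v₁' (D.pos w)) :
    ¬ D.curve u₁ v₁' (D.pos w) < D.curve u₂ v₂' (D.pos w) := by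
  intro hlt
  have hlo : D.curve u₂ v₂ (D.pos w) < D.curve u₁ v₁' (D.pos w) := t₂.lower_le.trans_lt a₁
  set s := max (D.pos u₁) (D.pos u₂) with hs
  have hsw : s < D.pos w := max_lt t₁.pos_lt t₂.pos_lt
  -- the first upper arc stays between the arcs of the second wedge
  have key : ∀ {v f}, D.Adj u₂ v → D.pos w ≤ D.pos v → f = D.curve u₂ v →
      D.curve u₁ v₁' (D.pos w) ≠ f (D.pos w) →
      ∀ x ∈ Set.Ioc s (D.pos w), D.curve u₁ v₁' x ≠ f x := by
    rintro v _ hv hwv rfl hne x hx heq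
    have hx1 := (le_max_left _ _).trans_lt hx.1
    have hx2 := (le_max_right _ _).trans_lt hx.1
    obtain ⟨rfl, rfl | rfl⟩ := eq_of_curve_eq h₁.upper hv hx1 (hx.2.trans t₁.le_upper) hx2
      (hx.2.trans hwv) heq
    · exact hne rfl
    · have : D.pos w = D.pos v₁' := le_antisymm hwv hx.2
      rw [this] at hne
      exact hne heq
  have cross : ∀ {f g : ℝ → ℝ}, Continuous f → Continuous g → f (D.pos w) < g (D.pos w) →
      (∀ x ∈ Set.Ioc s (D.pos w), f x ≠ g x) → f s ≤ g s := by
    intro f g hf hg hfg hne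
    by_contra! hgt
    obtain ⟨y, hy, hyeq⟩ := (isPreconnected_Icc (a := s) (b := D.pos w)).intermediate_value₂
      (a := D.pos w) (b := s) ⟨hsw.le, le_rfl⟩ ⟨le_rfl, hsw.le⟩ hf.continuousOn hg.continuousOn
      hfg.le hgt.le
    rcases hy.1.eq_or_lt with rfl | hy1
    · exact hgt.ne hyeq.symm
    · exact hne y ⟨hy1, hy.2⟩ hyeq
  have c1 := D.continuous_curve h₁.upper
  have hle : D.curve u₂ v₂ s ≤ D.curve u₁ v₁' s :=
    cross (D.continuous_curve h₂.lower) c1 hlo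
      fun x hx => (key h₂.lower t₂.le_lower rfl hlo.ne' x hx).symm
  have hge : D.curve u₁ v₁' s ≤ D.curve u₂ v₂' s :=
    cross c1 (D.continuous_curve h₂.upper) hlt (key h₂.upper t₂.le_upper rfl hlt.ne)
  rcases lt_trichotomy (D.pos u₁) (D.pos u₂) with hu | hu | hu
  · rw [max_eq_right hu.le] at hs
    rw [hs, D.curve_left h₂.lower] at hle
    rw [hs, D.curve_left h₂.upper] at hge
    exact D.curve_ne_height h₁.upper (D.left_mem h₂.lower) hu
      (t₂.pos_lt.trans_le t₁.le_upper) (le_antisymm hge hle)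
  · obtain rfl := D.pos_injOn (D.left_mem h₁.lower) (D.left_mem h₂.lower) hu
    exact h₂.not_between v₁' h₁.upper
      (key_lt_of_curve_lt h₂.lower h₁.upper t₂.pos_lt t₂.le_lower t₁.le_upper hlo)
      (key_lt_of_curve_lt h₁.upper h₂.upper t₂.pos_lt t₁.le_upper t₂.le_upper hlt)
  · rw [max_eq_left hu.le] at hs
    rw [hs, D.curve_left h₁.upper] at hle hge
    have := t₂.le_pos u₁ ⟨D.left_mem h₁.lower, hu, t₁.pos_lt.le.trans t₂.le_lower,
      t₁.pos_lt.le.trans t₂.le_upper, hle, hge⟩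
    exact absurd t₁.pos_lt this.not_gt

theorem IsTip.eq_of_lt_upper {u₁ v₁ v₁' u₂ v₂ v₂' w : ι} (h₁ : D.Wedge u₁ v₁ v₁')
    (t₁ : D.IsTip u₁ v₁ v₁' w) (h₂ : D.Wedge u₂ v₂ v₂') (t₂ : D.IsTip u₂ v₂ v₂' w)
    (a₁ : D.height w < D.curve u₁ v₁' (D.pos w)) (a₂ : D.height w < D.curve u₂ v₂' (D.pos w)) :
    u₁ = u₂ ∧ v₁' = v₂' := by
  have heq : D.curve u₁ v₁' (D.pos w) = D.curve u₂ v₂' (D.pos w) :=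
    le_antisymm (not_lt.1 (t₂.not_upper_lt h₂ h₁ t₁ a₂)) (not_lt.1 (t₁.not_upper_lt h₁ h₂ t₂ a₁))
  obtain ⟨hv, hu | hw⟩ :=
    eq_of_curve_eq h₁.upper h₂.upper t₁.pos_lt t₁.le_upper t₂.pos_lt t₂.le_upper heq
  · exact ⟨hu, hv⟩
  · obtain rfl := D.pos_injOn t₁.mem (D.right_mem h₁.upper) hw
    exact absurd (D.curve_right h₁.upper) a₁.ne'

variable (D)

/-- The drawing reflected in a horizontal axis. -/
def reflect : MonotoneDrawing ι where
  V := D.V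
  pos := D.pos
  height w := -D.height w
  Adj := D.Adj
  curve u v t := -D.curve u v t
  left_mem := D.left_mem
  right_mem := D.right_mem
  pos_injOn := D.pos_injOn
  pos_lt := D.pos_lt
  continuous_curve h := (D.continuous_curve h).neg
  curve_left h := by rw [D.curve_left h]
  curve_right h := by rw [D.curve_right h]
  curve_ne_height h hw h1 h2 := by
    simpa using D.curve_ne_height h hw h1 h2
  eq_or_of_curve_eq h h' h1 h2 h1' h2' heq :=
    D.eq_or_of_curve_eq h h' h1 h2 h1' h2' (neg_injective heq)

variable {D}

theorem Wedge.reflect {u v v' : ι} (h : D.Wedge u v v') : D.reflect.Wedge u v' v where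
  lower := h.upper
  upper := h.lower
  key_lt := neg_lt_neg h.key_lt
  not_between y hy h1 h2 := h.not_between y hy (neg_lt_neg_iff.1 h2) (neg_lt_neg_iff.1 h1)

theorem inWedge_reflect {u v v' w : ι} : D.reflect.InWedge u v' v w ↔ D.InWedge u v v' w :=
  ⟨fun h => ⟨h.mem, h.pos_lt, h.le_upper, h.le_lower, neg_le_neg_iff.1 h.le_curve,
    neg_le_neg_iff.1 h.lower_le⟩,
  fun h => ⟨h.mem, h.pos_lt, h.le_upper, h.le_lower, neg_le_neg h.le_curve,
    neg_le_neg h.lower_le⟩⟩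

theorem IsTip.reflect {u v v' w : ι} (h : D.IsTip u v v' w) : D.reflect.IsTip u v' v w :=
  ⟨inWedge_reflect.2 h.toInWedge, fun y hy => h.le_pos y (inWedge_reflect.1 hy)⟩

theorem IsTip.eq_of_lower_lt {u₁ v₁ v₁' u₂ v₂ v₂' w : ι} (h₁ : D.Wedge u₁ v₁ v₁')
    (t₁ : D.IsTip u₁ v₁ v₁' w) (h₂ : D.Wedge u₂ v₂ v₂') (t₂ : D.IsTip u₂ v₂ v₂' w)
    (a₁ : D.curve u₁ v₁ (D.pos w) < D.height w) (a₂ : D.curve u₂ v₂ (D.pos w) < D.height w) :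
    u₁ = u₂ ∧ v₁ = v₂ :=
  t₁.reflect.eq_of_lt_upper h₁.reflect h₂.reflect t₂.reflect (neg_lt_neg a₁) (neg_lt_neg a₂)

theorem Wedge.lower_unique {u v₁ v₂ v' : ι} (h₁ : D.Wedge u v₁ v') (h₂ : D.Wedge u v₂ v') :
    v₁ = v₂ := by
  rcases lt_trichotomy (D.key u v₁) (D.key u v₂) with h | h | h
  · exact absurd h₂.key_lt (h₁.not_between _ h₂.lower h)
  · exact key_injective h₁.lower h₂.lower h
  · exact absurd h₁.key_lt (h₂.not_between _ h₁.lower h)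

theorem exists_wedge {u v v' : ι} (h : D.Adj u v) (h' : D.Adj u v')
    (hlt : D.key u v < D.key u v') : ∃ y, D.Wedge u v y := by
  classical
  obtain ⟨y, hy, hmin⟩ := Finset.exists_min_image
    ((D.out u).filter fun y => D.key u v < D.key u y) (D.key u)
    ⟨v', Finset.mem_filter.2 ⟨D.mem_out.2 h', hlt⟩⟩
  rw [Finset.mem_filter, mem_out] at hy
  exact ⟨y, h, hy.1, hy.2, fun z hz h1 =>
    (hmin z (Finset.mem_filter.2 ⟨D.mem_out.2 hz, h1⟩)).not_gt⟩

variable (D)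

open scoped Classical in
/-- The out-neighbours of `u` along all arcs but the uppermost one. -/
def nonTop (u : ι) : Finset ι :=
  (D.out u).filter fun v => ∃ v', D.Adj u v' ∧ D.key u v < D.key u v'

theorem card_out_le (u : ι) : (D.out u).card ≤ 1 + (D.nonTop u).card := by
  classical
  rw [← Finset.card_filter_add_card_filter_not (s := D.out u)
    (fun v => ¬ ∃ v', D.Adj u v' ∧ D.key u v < D.key u v')]
  refine add_le_add (Finset.card_le_one.2 fun a ha b hb => ?_) ?_
  · simp only [Finset.mem_filter, mem_out] at ha hb
    push Not at ha hb
    exact key_injective ha.1 hb.1 (le_antisymm (hb.2 a ha.1) (ha.2 b hb.1))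
  · simp only [not_not]
    exact le_rfl

theorem sum_card_nonTop_le : ∑ u ∈ D.V, (D.nonTop u).card ≤ 2 * D.V.card := by
  classical
  rw [← Finset.card_sigma, mul_comm, ← Fintype.card_bool, ← Finset.card_univ (α := Bool),
    ← Finset.card_product]
  refine Finset.card_le_card_of_forall_subsingleton (fun p q => ∃ v', D.Wedge p.1 p.2 v' ∧
    D.IsTip p.1 p.2 v' q.1 ∧ (q.2 = true → D.height q.1 < D.curve p.1 v' (D.pos q.1)) ∧
    (q.2 = false → D.curve p.1 p.2 (D.pos q.1) < D.height q.1)) ?_ ?_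
  · rintro ⟨u, v⟩ huv
    simp only [Finset.mem_sigma, nonTop, Finset.mem_filter, mem_out] at huv
    obtain ⟨-, huv, v', hv', hlt⟩ := huv
    obtain ⟨y, hy⟩ := exists_wedge huv hv' hlt
    obtain ⟨w, hw⟩ := hy.exists_isTip
    have := curve_lt_of_key_lt hy.lower hy.upper hw.pos_lt hw.le_lower hw.le_upper hy.key_lt
    rcases hw.le_curve.lt_or_eq with h | h
    · exact ⟨(w, true), by simp [hw.mem], y, hy, hw, fun _ => h, by simp⟩
    · exact ⟨(w, false), by simp [hw.mem], y, hy, hw, by simp, fun _ => by simpa [h] using this⟩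
  · rintro ⟨w, b⟩ - ⟨u₁, v₁⟩ ⟨-, y₁, h₁, t₁, a₁, b₁⟩ ⟨u₂, v₂⟩ ⟨-, y₂, h₂, t₂, a₂, b₂⟩
    dsimp only at *
    cases b with
    | true =>
      obtain ⟨rfl, rfl⟩ := t₁.eq_of_lt_upper h₁ h₂ t₂ (a₁ rfl) (a₂ rfl)
      rw [h₁.lower_unique h₂]
    | false =>
      obtain ⟨rfl, rfl⟩ := t₁.eq_of_lower_lt h₁ h₂ t₂ (b₁ rfl) (b₂ rfl)
      rfl

theorem sum_max_one_card_out_le : ∑ u ∈ D.V, max 1 (D.out u).card ≤ 3 * D.V.card := by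
  calc _ ≤ ∑ u ∈ D.V, (1 + (D.nonTop u).card) :=
        Finset.sum_le_sum fun u _ => max_le (by omega) (D.card_out_le u)
    _ ≤ _ := by
        rw [Finset.sum_add_distrib]
        have := D.sum_card_nonTop_le
        simp only [Finset.sum_const, smul_eq_mul]
        omega

/-- The subdrawing on a subset of the vertices. -/
def restrict (W : Finset ι) (hW : W ⊆ D.V) : MonotoneDrawing ι where
  V := W
  pos := D.pos
  height := D.height
  Adj u v := D.Adj u v ∧ u ∈ W ∧ v ∈ W
  curve := D.curve
  left_mem h := h.2.1
  right_mem h := h.2.2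
  pos_injOn := D.pos_injOn.mono hW
  pos_lt h := D.pos_lt h.1
  continuous_curve h := D.continuous_curve h.1
  curve_left h := D.curve_left h.1
  curve_right h := D.curve_right h.1
  curve_ne_height h hw := D.curve_ne_height h.1 (hW hw)
  eq_or_of_curve_eq h h' := D.eq_or_of_curve_eq h.1 h'.1

open scoped Classical in
/-- The number of vertices to the right of a given one. -/
def rank (v : ι) : ℕ := (D.V.filter fun w => D.pos v < D.pos w).card

theorem rank_lt_card {v : ι} (hv : v ∈ D.V) : D.rank v < D.V.card := by
  classical
  exact Finset.card_lt_card (Finset.filter_ssubset.2 ⟨v, hv, lt_irrefl _⟩)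

theorem rank_lt_rank {u v : ι} (hv : v ∈ D.V) (h : D.pos u < D.pos v) : D.rank v < D.rank u := by
  classical
  refine Finset.card_lt_card (Finset.ssubset_iff_of_subset (fun w hw => ?_) |>.2
    ⟨v, by simp [hv, h], by simp⟩)
  rw [Finset.mem_filter] at hw ⊢
  exact ⟨hw.1, h.trans hw.2⟩

theorem rank_injOn : Set.InjOn D.rank D.V := by
  intro u hu v hv h
  rcases lt_trichotomy (D.pos u) (D.pos v) with h' | h' | h'
  · exact absurd h (D.rank_lt_rank hv h').ne'
  · exact D.pos_injOn hu hv h'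
  · exact absurd h (D.rank_lt_rank hu h').ne

open scoped Classical in
theorem image_rank : D.V.image D.rank = Finset.range D.V.card := by
  refine Finset.eq_of_subset_of_card_le (fun k hk => ?_) ?_
  · obtain ⟨v, hv, rfl⟩ := Finset.mem_image.1 hk
    exact Finset.mem_range.2 (D.rank_lt_card hv)
  · rw [Finset.card_image_of_injOn D.rank_injOn, Finset.card_range]

open scoped Classical in
/-- The out-degree of the vertex of a given rank, replaced by `1` when it vanishes. -/
def outDeg (k : ℕ) : ℕ := max 1 (∑ v ∈ D.V with D.rank v = k, (D.out v).card)

theorem one_le_outDeg (k : ℕ) : 1 ≤ D.outDeg k := le_max_left _ _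

theorem outDeg_rank {v : ι} (hv : v ∈ D.V) : D.outDeg (D.rank v) = max 1 (D.out v).card := by
  classical
  rw [outDeg, Finset.sum_eq_single v]
  · intro w hw hwv
    rw [Finset.mem_filter] at hw
    exact absurd (D.rank_injOn hw.1 hv hw.2) hwv
  · simp [hv]

theorem sum_outDeg_le {k : ℕ} (hk : k ≤ D.V.card) : ∑ i ∈ Finset.range k, D.outDeg i ≤ 3 * k := by
  classical
  set W := D.V.filter fun v => D.rank v < k with hW
  have hWV : W ⊆ D.V := Finset.filter_subset _ _
  have himg : W.image D.rank = Finset.range k := by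
    ext i
    simp only [hW, Finset.mem_image, Finset.mem_filter, Finset.mem_range]
    constructor
    · rintro ⟨v, ⟨-, h⟩, rfl⟩
      exact h
    · intro hi
      have : i ∈ D.V.image D.rank := by
        rw [D.image_rank]
        exact Finset.mem_range.2 (hi.trans_le hk)
      obtain ⟨v, hv, rfl⟩ := Finset.mem_image.1 this
      exact ⟨v, ⟨hv, hi⟩, rfl⟩
  have hinj : Set.InjOn D.rank W := D.rank_injOn.mono hWV
  have hcard : W.card = k := by
    rw [← Finset.card_image_of_injOn hinj, himg, Finset.card_range]
  rw [← himg, Finset.sum_image hinj]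
  have hout : ∀ v ∈ W, D.outDeg (D.rank v) = max 1 ((D.restrict W hWV).out v).card := by
    intro v hv
    rw [D.outDeg_rank (hWV hv)]
    congr 2
    ext w
    rw [mem_out, mem_out]
    refine ⟨fun h => ⟨h, hv, ?_⟩, fun h => h.1⟩
    rw [hW, Finset.mem_filter] at hv ⊢
    exact ⟨D.right_mem h, (D.rank_lt_rank (D.right_mem h) (D.pos_lt h)).trans hv.2⟩
  rw [Finset.sum_congr rfl hout]
  simpa [restrict, hcard] using (D.restrict W hWV).sum_max_one_card_out_le

/-- The continuations of directed paths that start at `v` and end at `a`. -/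
def tails (a v : ι) : Set (List ι) :=
  {L | (v :: L).IsChain D.Adj ∧ (v :: L).getLast? = some a}

theorem tails_self (a : ι) : D.tails a a = {[]} := by
  ext L
  constructor
  · rintro ⟨hc, hl⟩
    rcases L.eq_nil_or_concat' with rfl | ⟨M, b, rfl⟩
    · rfl
    · have hb : b = a := by
        rwa [← List.cons_append, List.getLast?_concat, Option.some_inj] at hl
      have hp : (a :: (M ++ [b])).Pairwise fun u v => D.pos u < D.pos v :=
        List.isChain_iff_pairwise.1 (hc.imp fun _ _ h => D.pos_lt h)
      rw [List.pairwise_cons] at hp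
      have := hp.1 b (by simp)
      rw [hb] at this
      exact absurd this (lt_irrefl _)
  · rintro rfl
    simp [tails]

theorem tails_of_ne {a v : ι} (h : v ≠ a) :
    D.tails a v = ⋃ w ∈ D.out v, (fun L => w :: L) '' D.tails a w := by
  ext L
  simp only [Set.mem_iUnion, Set.mem_image, tails, Set.mem_ofPred_eq]
  constructor
  · rintro ⟨hc, hl⟩
    match L, hc, hl with
    | [], hc, hl => simp at hl; exact absurd hl h
    | w :: M, hc, hl =>
      rw [List.isChain_cons_cons] at hc
      refine ⟨w, D.mem_out.2 hc.1, M, ⟨hc.2, ?_⟩, rfl⟩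
      simpa [List.getLast?_cons_cons] using hl
  · rintro ⟨w, hw, M, ⟨hc, hl⟩, rfl⟩
    refine ⟨List.isChain_cons_cons.2 ⟨D.mem_out.1 hw, hc⟩, ?_⟩
    simpa [List.getLast?_cons_cons] using hl

end MonotoneDrawing

theorem sum_le_sum_range_sub_of_monotone {f : ℤ → ℝ} (hf : Monotone f) (h0 : ∀ j, 0 ≤ f j)
    {S : Finset ℕ} {m k : ℕ} (hS : ∀ s ∈ S, s < k) (hm : S.card ≤ m) :
    ∑ s ∈ S, f s ≤ ∑ i ∈ Finset.range m, f ((k : ℤ) - 1 - i) := by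
  induction m generalizing S k with
  | zero => simp [Finset.card_eq_zero.1 (Nat.le_zero.1 hm)]
  | succ m ih =>
    rcases S.eq_empty_or_nonempty with rfl | hne
    · simpa using Finset.sum_nonneg fun i _ => h0 _
    have hmax := S.max'_mem hne
    rw [← Finset.add_sum_erase S _ hmax, Finset.sum_range_succ']
    have hlt : ∀ s ∈ S.erase (S.max' hne), s < S.max' hne := fun s hs =>
      lt_of_le_of_ne (S.le_max' s (Finset.mem_of_mem_erase hs)) (Finset.ne_of_mem_erase hs)
    have hk := hS _ hmax
    have h1 := ih hlt (by rw [Finset.card_erase_of_mem hmax]; omega)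
    have h2 : ∑ i ∈ Finset.range m, f (((S.max' hne : ℕ) : ℤ) - 1 - i) ≤
        ∑ i ∈ Finset.range m, f ((k : ℤ) - 1 - ((i + 1 : ℕ) : ℤ)) :=
      Finset.sum_le_sum fun i _ => hf (by push_cast; omega)
    have h3 : f (S.max' hne : ℕ) ≤ f ((k : ℤ) - 1 - (0 : ℕ)) := hf (by push_cast; omega)
    linarith

namespace MonotoneDrawing

variable {ι : Type*} (D : MonotoneDrawing ι)

theorem finite_tails_and_ncard_le {α : ℝ} (hα : 1 < α) (a : ι) {v : ι} (hv : v ∈ D.V) :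
    (D.tails a v).Finite ∧ ((D.tails a v).ncard : ℝ) ≤ α * windowSeq α D.outDeg (D.rank v) := by
  classical
  have hpos : ∀ j, 0 < windowSeq α D.outDeg j := windowSeq_pos hα D.one_le_outDeg
  have hmono : Monotone (windowSeq α D.outDeg) := windowSeq_mono hα D.one_le_outDeg
  induction hk : D.rank v using Nat.strong_induction_on generalizing v with
  | _ k ih =>
    subst hk
    by_cases hva : v = a
    · subst hva
      rw [tails_self]
      refine ⟨Set.finite_singleton _, ?_⟩
      have h1 : windowSeq α D.outDeg (-1) ≤ windowSeq α D.outDeg (D.rank v) := hmono (by omega)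
      rw [windowSeq_of_neg _ _ (by norm_num), zpow_neg_one] at h1
      have : α * α⁻¹ = 1 := mul_inv_cancel₀ (by positivity)
      rw [Set.ncard_singleton, Nat.cast_one]
      nlinarith
    · rw [D.tails_of_ne hva]
      have hw : ∀ w ∈ D.out v, w ∈ D.V ∧ D.rank w < D.rank v := fun w hw =>
        ⟨D.right_mem (D.mem_out.1 hw),
          D.rank_lt_rank (D.right_mem (D.mem_out.1 hw)) (D.pos_lt (D.mem_out.1 hw))⟩
      have ih' : ∀ w ∈ D.out v, _ := fun w h => ih (D.rank w) (hw w h).2 (hw w h).1 rfl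
      refine ⟨Set.Finite.biUnion (D.out v).finite_toSet fun w h => (ih' w h).1.image _, ?_⟩
      have hinj : Set.InjOn D.rank (D.out v) := D.rank_injOn.mono fun w h => (hw w h).1
      calc _ ≤ ((∑ w ∈ D.out v, ((fun L => w :: L) '' D.tails a w).ncard : ℕ) : ℝ) :=
            Nat.cast_le.2 (Finset.set_ncard_biUnion_le _ _)
        _ ≤ ∑ w ∈ D.out v, α * windowSeq α D.outDeg (D.rank w) := by
            push_cast
            refine Finset.sum_le_sum fun w h => ?_
            rw [Set.ncard_image_of_injective _ (List.cons_injective)]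
            exact (ih' w h).2
        _ = α * ∑ s ∈ (D.out v).image D.rank, windowSeq α D.outDeg s := by
            rw [← Finset.mul_sum, Finset.sum_image hinj]
        _ ≤ α * ∑ i ∈ Finset.range (D.outDeg (D.rank v)),
              windowSeq α D.outDeg ((D.rank v : ℤ) - 1 - i) := by
            refine mul_le_mul_of_nonneg_left (sum_le_sum_range_sub_of_monotone hmono
              (fun j => (hpos j).le) ?_ ?_) (by positivity)
            · intro s hs
              obtain ⟨w, h, rfl⟩ := Finset.mem_image.1 hs
              exact (hw w h).2
            · rw [D.outDeg_rank hv]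
              exact Finset.card_image_le.trans (le_max_right _ _)
        _ = _ := by rw [← windowSeq_natCast]

theorem finite_tails (a : ι) {v : ι} (hv : v ∈ D.V) : (D.tails a v).Finite :=
  (D.finite_tails_and_ncard_le one_lt_two a hv).1

theorem ncard_tails_le {α : ℝ} (hα : 1 < α) (h3 : α ^ 3 = α ^ 2 + α + 1) (a : ι) {v : ι}
    (hv : v ∈ D.V) : ((D.tails a v).ncard : ℝ) ≤ α * α ^ D.V.card := by
  refine (D.finite_tails_and_ncard_le hα a hv).2.trans
    (mul_le_mul_of_nonneg_left ?_ (by positivity))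
  exact (windowSeq_le_pow hα h3 D.V.card D.outDeg D.one_le_outDeg
    (fun k hk => D.sum_outDeg_le hk) _ (D.rank_lt_card hv)).trans
    (pow_le_pow_right₀ hα.le (D.rank_lt_card hv).le)

end MonotoneDrawing
/-- No two points of `V` are collinear with `o`, and `o` is not in `V`. -/
def InGeneralPosition (V : Finset Pt) (o : Pt) : Prop :=
  o ∉ V ∧ ∀ a ∈ V, ∀ b ∈ V, a ≠ b → crossp (a - o) (b - o) ≠ 0

/-- A point of the plane as a complex number. -/
def toComplex (x : Pt) : ℂ := ⟨x.1, x.2⟩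

/-- The unit vector in a given direction. -/
def unitVec (t : ℝ) : Pt := (Real.cos t, Real.sin t)

/-- The argument of `x` as seen from `o`. -/
def angle (o x : Pt) : ℝ := (toComplex (x - o)).arg

/-- The distance from `o` to `x`. -/
def radius (o x : Pt) : ℝ := ‖toComplex (x - o)‖

theorem sub_eq_radius_smul (o x : Pt) : x - o = radius o x • unitVec (angle o x) := by
  ext
  · exact (Complex.norm_mul_cos_arg (toComplex (x - o))).symm
  · exact (Complex.norm_mul_sin_arg (toComplex (x - o))).symm

theorem radius_pos {o x : Pt} (h : x ≠ o) : 0 < radius o x := by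
  refine norm_pos_iff.2 fun h0 => h ?_
  rw [← sub_eq_zero]
  ext
  · exact congrArg Complex.re h0
  · exact congrArg Complex.im h0

theorem crossp_unitVec (s t : ℝ) : crossp (unitVec s) (unitVec t) = Real.sin (t - s) := by
  simp only [crossp, unitVec, Real.sin_sub]
  ring

theorem crossp_smul_left (r : ℝ) (x y : Pt) : crossp (r • x) y = r * crossp x y := by
  simp only [crossp, Prod.smul_fst, Prod.smul_snd, smul_eq_mul]
  ring

theorem crossp_smul_right (r : ℝ) (x y : Pt) : crossp x (r • y) = r * crossp x y := by
  simp only [crossp, Prod.smul_fst, Prod.smul_snd, smul_eq_mul]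
  ring

theorem crossp_comm (x y : Pt) : crossp x y = -crossp y x := by
  simp only [crossp]
  ring

theorem crossp_unitVec_right (o v : Pt) (t : ℝ) :
    crossp (unitVec t) (v - o) = radius o v * Real.sin (angle o v - t) := by
  rw [sub_eq_radius_smul o v, crossp_smul_right, crossp_unitVec]

theorem crossp_unitVec_left (o u : Pt) (t : ℝ) :
    crossp (u - o) (unitVec t) = radius o u * Real.sin (t - angle o u) := by
  rw [sub_eq_radius_smul o u, crossp_smul_left, crossp_unitVec]

theorem crossp_eq_radius_mul_sin (o u v : Pt) : crossp (u - o) (v - o) =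
    radius o u * radius o v * Real.sin (angle o v - angle o u) := by
  rw [sub_eq_radius_smul o v, crossp_smul_right, crossp_unitVec_left]
  ring

theorem angle_sub_lt_pi {o u v : Pt} (h : 0 < crossp (u - o) (v - o)) :
    angle o v - angle o u < Real.pi := by
  by_contra! hle
  have h1 : angle o v - angle o u < 2 * Real.pi := by
    have := Complex.neg_pi_lt_arg (toComplex (u - o))
    have := Complex.arg_le_pi (toComplex (v - o))
    simp only [angle]
    linarith
  have h2 : Real.sin (angle o v - angle o u) ≤ 0 := by
    rw [← Real.sin_sub_two_pi]
    exact Real.sin_nonpos_of_nonpos_of_neg_pi_le (by linarith) (by linarith)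
  rw [crossp_eq_radius_mul_sin] at h
  have : 0 ≤ radius o u * radius o v := mul_nonneg (norm_nonneg _) (norm_nonneg _)
  nlinarith

/-- The inverse of the distance from `o` to the line through `u` and `v` in direction `t`. -/
def polarCurve (o u v : Pt) (t : ℝ) : ℝ := crossp (unitVec t) (v - u) / crossp (u - o) (v - o)

theorem crossp_sub_right (d o u v : Pt) :
    crossp d (v - u) = crossp d (v - o) + crossp (u - o) d := by
  simp only [crossp, Prod.fst_sub, Prod.snd_sub]
  ring

theorem polarCurve_smul_mem_openSegment {o u v d : Pt}
    (h1 : 0 < crossp d (v - o)) (h2 : 0 < crossp (u - o) d) :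
    o + (crossp d (v - u) / crossp (u - o) (v - o))⁻¹ • d ∈ openSegment ℝ u v := by
  set A := crossp d (v - o) with hA
  set B := crossp (u - o) d with hB
  have hs : crossp d (v - u) = A + B := crossp_sub_right d o u v
  have hAB : 0 < A + B := add_pos h1 h2
  refine ⟨A / (A + B), B / (A + B), by positivity, by positivity, by field_simp, ?_⟩
  rw [hs, inv_div]
  ext
  · simp only [Prod.fst_add, Prod.smul_fst, smul_eq_mul]
    field_simp
    simp only [hA, hB, crossp, Prod.fst_sub, Prod.snd_sub]
    ring
  · simp only [Prod.snd_add, Prod.smul_snd, smul_eq_mul]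
    field_simp
    simp only [hA, hB, crossp, Prod.fst_sub, Prod.snd_sub]
    ring

theorem polarCurve_mem_openSegment {o u v : Pt} {t : ℝ} (hu : u ≠ o) (hv : v ≠ o)
    (h : 0 < crossp (u - o) (v - o)) (h1 : angle o u < t) (h2 : t < angle o v) :
    o + (polarCurve o u v t)⁻¹ • unitVec t ∈ openSegment ℝ u v := by
  have hpi := angle_sub_lt_pi h
  refine polarCurve_smul_mem_openSegment ?_ ?_
  · rw [crossp_unitVec_right]
    exact mul_pos (radius_pos hv) (Real.sin_pos_of_pos_of_lt_pi (by linarith) (by linarith))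
  · rw [crossp_unitVec_left]
    exact mul_pos (radius_pos hu) (Real.sin_pos_of_pos_of_lt_pi (by linarith) (by linarith))

theorem polarCurve_left {o u v : Pt} (hu : u ≠ o) (h : crossp (u - o) (v - o) ≠ 0) :
    polarCurve o u v (angle o u) = (radius o u)⁻¹ := by
  have hr := radius_pos hu
  have : crossp (u - o) (v - o) = radius o u * crossp (unitVec (angle o u)) (v - u) := by
    rw [crossp_sub_right _ o u v, crossp_unitVec_left, sub_self, Real.sin_zero, mul_zero, add_zero,
      ← crossp_smul_left, ← sub_eq_radius_smul]
  have h0 : crossp (unitVec (angle o u)) (v - u) ≠ 0 := right_ne_zero_of_mul (this ▸ h)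
  rw [polarCurve, this]
  field_simp

theorem polarCurve_right {o u v : Pt} (hv : v ≠ o) (h : crossp (u - o) (v - o) ≠ 0) :
    polarCurve o u v (angle o v) = (radius o v)⁻¹ := by
  have hr := radius_pos hv
  have : crossp (u - o) (v - o) = radius o v * crossp (unitVec (angle o v)) (v - u) := by
    rw [crossp_sub_right _ o u v, crossp_unitVec_right, sub_self, Real.sin_zero, mul_zero, zero_add,
      ← crossp_smul_right, ← sub_eq_radius_smul]
  have h0 : crossp (unitVec (angle o v)) (v - u) ≠ 0 := right_ne_zero_of_mul (this ▸ h)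
  rw [polarCurve, this]
  field_simp

theorem InGeneralPosition.ne {V : Finset Pt} {o v : Pt} (ho : InGeneralPosition V o)
    (hv : v ∈ V) : v ≠ o := fun h => ho.1 (h ▸ hv)

theorem InGeneralPosition.injOn_angle {V : Finset Pt} {o : Pt} (ho : InGeneralPosition V o) :
    Set.InjOn (angle o) V := by
  intro u hu v hv h
  by_contra hne
  refine ho.2 u hu v hv hne ?_
  rw [crossp_eq_radius_mul_sin, h, sub_self, Real.sin_zero, mul_zero]

/-- A directed edge of `G` that is counterclockwise as seen from `o` and does not cross the
negative horizontal ray from `o`. -/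
def PSLG.PolarAdj (G : PSLG) (o u v : Pt) : Prop :=
  s(u, v) ∈ G.E ∧ 0 < crossp (u - o) (v - o) ∧ angle o u < angle o v

theorem PSLG.polarCurve_ne {G : PSLG} {o : Pt} (ho : InGeneralPosition G.V o) {u v w : Pt}
    (h : G.PolarAdj o u v) (hw : w ∈ G.V) (h1 : angle o u < angle o w)
    (h2 : angle o w < angle o v) : polarCurve o u v (angle o w) ≠ (radius o w)⁻¹ := by
  intro he
  obtain ⟨hu, hv, -⟩ := G.valid.1 u v h.1
  have := polarCurve_mem_openSegment (ho.ne hu) (ho.ne hv) h.2.1 h1 h2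
  rw [he, inv_inv, ← sub_eq_radius_smul, add_sub_cancel] at this
  exact G.valid.2.1 u v h.1 w hw this

/-- The edges of `G` drawn in polar coordinates around `o`, cut along the negative horizontal
ray. -/
def PSLG.polarDrawing (G : PSLG) (o : Pt) (ho : InGeneralPosition G.V o) : MonotoneDrawing Pt where
  V := G.V
  pos := angle o
  height v := (radius o v)⁻¹
  Adj := G.PolarAdj o
  curve := polarCurve o
  left_mem h := (G.valid.1 _ _ h.1).1
  right_mem h := (G.valid.1 _ _ h.1).2.1
  pos_injOn := ho.injOn_angle
  pos_lt h := h.2.2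
  continuous_curve {u v} _ := by
    unfold polarCurve crossp unitVec
    fun_prop
  curve_left h := polarCurve_left (ho.ne (G.valid.1 _ _ h.1).1) h.2.1.ne'
  curve_right h := polarCurve_right (ho.ne (G.valid.1 _ _ h.1).2.1) h.2.1.ne'
  curve_ne_height h hw h1 h2 := G.polarCurve_ne ho h hw h1 h2
  eq_or_of_curve_eq {u v u' v' t} h h' h1 h2 h1' h2' he := by
    have hmem : ∀ {u v}, G.PolarAdj o u v → u ∈ G.V ∧ v ∈ G.V := fun h =>
      ⟨(G.valid.1 _ _ h.1).1, (G.valid.1 _ _ h.1).2.1⟩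
    have key : ∀ {u v u' v' t}, G.PolarAdj o u v → G.PolarAdj o u' v' → angle o u ≤ t →
        t ≤ angle o v → polarCurve o u v t = polarCurve o u' v' t →
        (t = angle o u' ∨ t = angle o v') → ∃ w, t = angle o w ∧ (w = u ∨ w = v) := by
      intro u v u' v' t h h' h1 h2 he ht
      rcases h1.eq_or_lt with h1 | h1
      · exact ⟨u, h1.symm, Or.inl rfl⟩
      rcases h2.eq_or_lt with h2 | h2
      · exact ⟨v, h2, Or.inr rfl⟩
      exfalso
      rcases ht with rfl | rfl
      · refine G.polarCurve_ne ho h (hmem h').1 h1 h2 (he.trans ?_)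
        exact polarCurve_left (ho.ne (hmem h').1) h'.2.1.ne'
      · refine G.polarCurve_ne ho h (hmem h').2 h1 h2 (he.trans ?_)
        exact polarCurve_right (ho.ne (hmem h').2) h'.2.1.ne'
    by_cases hend : (t = angle o u ∨ t = angle o v) ∨ (t = angle o u' ∨ t = angle o v')
    · right
      have hw : ∃ w, t = angle o w ∧ (w = u ∨ w = v) := by
        rcases hend with (ht | ht) | ht
        · exact ⟨u, ht, Or.inl rfl⟩
        · exact ⟨v, ht, Or.inr rfl⟩
        · exact key h h' h1 h2 he ht
      obtain ⟨w, rfl, hw⟩ := hw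
      have hw' : ∃ w', angle o w = angle o w' ∧ (w' = u' ∨ w' = v') := by
        refine key h' h h1' h2' he.symm ?_
        rcases hw with rfl | rfl
        · exact Or.inl rfl
        · exact Or.inr rfl
      obtain ⟨w', hww, hw'⟩ := hw'
      have : w = w' := by
        refine ho.injOn_angle ?_ ?_ hww
        · rcases hw with rfl | rfl
          exacts [(hmem h).1, (hmem h).2]
        · rcases hw' with rfl | rfl
          exacts [(hmem h').1, (hmem h').2]
      subst this
      exact ⟨w, rfl, hw, hw'⟩
    · left
      push Not at hend
      have hp := polarCurve_mem_openSegment (ho.ne (hmem h).1) (ho.ne (hmem h).2) h.2.1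
        (lt_of_le_of_ne h1 hend.1.1.symm) (lt_of_le_of_ne h2 hend.1.2)
      have hp' := polarCurve_mem_openSegment (ho.ne (hmem h').1) (ho.ne (hmem h').2) h'.2.1
        (lt_of_le_of_ne h1' hend.2.1.symm) (lt_of_le_of_ne h2' hend.2.2)
      rw [he] at hp
      have hs : s(u, v) = s(u', v') := by
        by_contra hne
        have := G.valid.2.2 u v u' v' h.1 h'.1 hne
        exact Set.notMem_empty _ (this.subset ⟨hp, hp'⟩)
      rcases Sym2.eq_iff.1 hs with hs | ⟨rfl, rfl⟩
      · exact hs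
      · exact absurd h.2.2 h'.2.2.not_gt

open Filter Topology in
/-- Points in general position are dense. -/
theorem exists_inGeneralPosition (V : Finset Pt) {o₀ : Pt} {P : Pt → Prop}
    (hP : ∀ᶠ o in 𝓝 o₀, P o) : ∃ o, InGeneralPosition V o ∧ P o := by
  set γ : ℝ → Pt := fun t => o₀ + (t, t ^ 2) with hγ
  have hcont : Tendsto γ (𝓝[≠] 0) (𝓝 o₀) := by
    have : Continuous γ := by fun_prop
    refine (this.tendsto' 0 o₀ ?_).mono_left nhdsWithin_le_nhds
    ext <;> simp [hγ]
  have hfin : ∀ S : Set ℝ, S.Finite → ∀ᶠ t in 𝓝[≠] (0 : ℝ), t ∉ S := fun S hS =>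
    (nhdsNE_le_cofinite (0 : ℝ)) hS.compl_mem_cofinite
  have h1 : ∀ᶠ t in 𝓝[≠] (0 : ℝ), γ t ∉ V := by
    refine (hfin _ (V.finite_toSet.image fun a : Pt => a.1 - o₀.1)).mono fun t ht hm => ht ?_
    exact ⟨γ t, hm, by simp [hγ]⟩
  have h2 : ∀ᶠ t in 𝓝[≠] (0 : ℝ), ∀ a ∈ V, ∀ b ∈ V, a ≠ b →
      crossp (a - γ t) (b - γ t) ≠ 0 := by
    refine (eventually_all_finset V).2 fun a _ => (eventually_all_finset V).2 fun b _ => ?_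
    by_cases hab : a = b
    · exact Eventually.of_forall fun t h => absurd hab h
    set p : Polynomial ℝ := Polynomial.C (b.1 - a.1) * Polynomial.X ^ 2 +
      Polynomial.C (a.2 - b.2) * Polynomial.X + Polynomial.C (crossp (a - o₀) (b - o₀)) with hp
    have hp0 : p ≠ 0 := by
      intro h0
      refine hab (Prod.ext ?_ ?_)
      · have := congrArg (fun q : Polynomial ℝ => q.coeff 2) h0
        simp [hp, -map_sub] at this
        linarith
      · have := congrArg (fun q : Polynomial ℝ => q.coeff 1) h0
        simp [hp, -map_sub, Polynomial.coeff_C] at this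
        linarith
    refine (hfin _ (p.rootSet_finite ℝ)).mono fun t ht _ h0 => ht ?_
    rw [Polynomial.mem_rootSet]
    refine ⟨hp0, ?_⟩
    rw [← h0]
    simp only [hp, hγ, crossp, Polynomial.coe_aeval_eq_eval, Polynomial.eval_add,
      Polynomial.eval_mul, Polynomial.eval_C, Polynomial.eval_pow, Polynomial.eval_X, Prod.fst_sub,
      Prod.snd_sub, Prod.fst_add, Prod.snd_add]
    ring
  obtain ⟨t, ⟨ht1, ht2⟩, ht3⟩ := ((h1.and h2).and (hcont.eventually hP)).exists
  exact ⟨γ t, ⟨ht1, ht2⟩, ht3⟩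

open Filter Topology in
/-- A plane straight-line graph on `n` vertices has at most `3 * n` edges. -/
theorem PSLG.card_edges_le (G : PSLG) : G.E.card ≤ 3 * G.V.card := by
  classical
  obtain ⟨m, hm⟩ : ∃ m : ℝ, ∀ v ∈ G.V, m < v.1 := by
    obtain ⟨m, hm⟩ := (G.V.image Prod.fst).bddBelow
    exact ⟨m - 1, fun v hv => by
      have := hm (Finset.mem_coe.2 (Finset.mem_image_of_mem Prod.fst hv))
      linarith⟩
  obtain ⟨o, ho, hleft⟩ := exists_inGeneralPosition G.V (o₀ := ((m, 0) : Pt))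
    (P := fun o => ∀ v ∈ G.V, o.1 < v.1) ((eventually_all_finset G.V).2 fun v hv =>
      (continuous_fst.tendsto _).eventually_lt_const (hm v hv))
  have hangle : ∀ v ∈ G.V, |angle o v| < Real.pi / 2 := fun v hv =>
    Complex.abs_arg_lt_pi_div_two_iff.2 (Or.inl (sub_pos.2 (hleft v hv)))
  have hadj : ∀ u v, s(u, v) ∈ G.E → 0 < crossp (u - o) (v - o) → G.PolarAdj o u v := by
    intro u v huv h
    refine ⟨huv, h, ?_⟩
    by_contra! hle
    obtain ⟨hu, hv, -⟩ := G.valid.1 u v huv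
    have h1 := abs_lt.1 (hangle u hu)
    have h2 := abs_lt.1 (hangle v hv)
    have h3 := Real.sin_nonpos_of_nonpos_of_neg_pi_le (x := angle o v - angle o u)
      (by linarith) (by linarith)
    rw [crossp_eq_radius_mul_sin] at h
    have := mul_pos (radius_pos (ho.ne hu)) (radius_pos (ho.ne hv))
    nlinarith
  set D := G.polarDrawing o ho with hD
  have hsub : G.E ⊆ (G.V.sigma D.out).image fun p => s(p.1, p.2) := by
    intro e he
    induction e using Sym2.ind with
    | _ u v =>
      obtain ⟨hu, hv, hne⟩ := G.valid.1 u v he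
      rw [Finset.mem_image]
      rcases (ho.2 u hu v hv hne).lt_or_gt with h | h
      · refine ⟨⟨v, u⟩, Finset.mem_sigma.2 ⟨hv, D.mem_out.2 (hadj v u ?_ ?_)⟩, Sym2.eq_swap⟩
        · rwa [Sym2.eq_swap]
        · rw [crossp_comm]
          linarith
      · exact ⟨⟨u, v⟩, Finset.mem_sigma.2 ⟨hu, D.mem_out.2 (hadj u v he h)⟩, rfl⟩
  calc G.E.card ≤ (G.V.sigma D.out).card := (Finset.card_le_card hsub).trans Finset.card_image_le
    _ = ∑ u ∈ G.V, (D.out u).card := Finset.card_sigma _ _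
    _ ≤ ∑ u ∈ D.V, max 1 (D.out u).card := Finset.sum_le_sum fun u _ => le_max_right _ _
    _ ≤ _ := D.sum_max_one_card_out_le

open scoped Classical in
/-- The directed segments in `T` that are counterclockwise as seen from `o`. -/
def ccwPattern (T : Finset (Pt × Pt)) (o : Pt) : Finset (Pt × Pt) :=
  T.filter fun p => 0 < crossp (p.1 - o) (p.2 - o)

theorem exists_sum_mul_crossp_eq {s : Finset (Pt × Pt)} (hs : 2 < s.card) :
    ∃ (c : s → ℝ) (κ : ℝ), (∃ p, c p ≠ 0) ∧
      ∀ o, ∑ p : s, c p * crossp (p.1.1 - o) (p.1.2 - o) = κ := by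
  have hdep : ¬ LinearIndependent ℝ (fun p : s => p.1.1 - p.1.2) := by
    intro h
    have := h.fintype_card_le_finrank
    rw [Module.finrank_prod, Module.finrank_self, Fintype.card_coe] at this
    omega
  obtain ⟨c, hc, hne⟩ := Fintype.not_linearIndependent_iff.1 hdep
  refine ⟨c, ∑ p : s, c p * crossp p.1.1 p.1.2, hne, fun o => ?_⟩
  have h1 := congrArg Prod.fst hc
  have h2 := congrArg Prod.snd hc
  simp only [Prod.fst_sum, Prod.snd_sum, Prod.smul_fst, Prod.smul_snd, Prod.fst_sub, Prod.snd_sub,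
    Prod.fst_zero, Prod.snd_zero, smul_eq_mul] at h1 h2
  calc _ = ∑ p : s, (c p * crossp p.1.1 p.1.2 + o.1 * (c p * (p.1.1.2 - p.1.2.2)) -
          o.2 * (c p * (p.1.1.1 - p.1.2.1))) := by
        refine Finset.sum_congr rfl fun p _ => ?_
        simp only [crossp, Prod.fst_sub, Prod.snd_sub]
        ring
    _ = _ := by
        rw [Finset.sum_sub_distrib, Finset.sum_add_distrib, ← Finset.mul_sum, ← Finset.mul_sum,
          h1, h2]
        ring

/-- `A` is the pattern seen from some point in general position with respect to `V`. -/
def IsCcwPattern (V : Finset Pt) (T A : Finset (Pt × Pt)) : Prop :=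
  ∃ o, InGeneralPosition V o ∧ ccwPattern T o = A

open scoped Classical in
/-- The patterns seen from the points in general position with respect to `V`. -/
def ccwPatterns (V : Finset Pt) (T : Finset (Pt × Pt)) : Finset (Finset (Pt × Pt)) :=
  T.powerset.filter (IsCcwPattern V T)

theorem mem_ccwPatterns {V : Finset Pt} {T : Finset (Pt × Pt)} {A : Finset (Pt × Pt)} :
    A ∈ ccwPatterns V T ↔ IsCcwPattern V T A := by
  classical
  rw [ccwPatterns, Finset.mem_filter, Finset.mem_powerset, and_iff_right_iff_imp]
  rintro ⟨o, -, rfl⟩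
  exact Finset.filter_subset _ _

open scoped Classical in
theorem card_le_two_of_shatters {V : Finset Pt} {T : Finset (Pt × Pt)}
    (hT : ∀ p ∈ T, p.1 ∈ V ∧ p.2 ∈ V ∧ p.1 ≠ p.2) {s : Finset (Pt × Pt)}
    (hs : (ccwPatterns V T).Shatters s) : s.card ≤ 2 := by
  by_contra! hcard
  obtain ⟨c, κ, ⟨q, hq⟩, hκ⟩ := exists_sum_mul_crossp_eq hcard
  have hsT : s ⊆ T := by
    obtain ⟨A, hA, hsA⟩ := hs.exists_superset
    exact hsA.trans (Finset.mem_powerset.1 (Finset.mem_filter.1 hA).1)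
  have key : ∀ P : s → Prop, ∃ o, ∀ p : s,
      (P p → 0 < crossp (p.1.1 - o) (p.1.2 - o)) ∧
      (¬ P p → crossp (p.1.1 - o) (p.1.2 - o) < 0) := by
    intro P
    obtain ⟨A, hA, hsA⟩ := hs (t := s.filter fun p => ∃ h : p ∈ s, P ⟨p, h⟩)
      (Finset.filter_subset _ _)
    obtain ⟨o, ho, rfl⟩ := mem_ccwPatterns.1 hA
    refine ⟨o, fun p => ?_⟩
    have hp : (p : Pt × Pt) ∈ ccwPattern T o ↔ P p := by
      have := congrArg (fun B => (p : Pt × Pt) ∈ B) hsA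
      simpa using this
    rw [ccwPattern, Finset.mem_filter, and_iff_right (hsT p.2)] at hp
    obtain ⟨h1, h2, h3⟩ := hT p (hsT p.2)
    refine ⟨hp.2, fun hP => ?_⟩
    exact lt_of_le_of_ne (not_lt.1 fun h => hP (hp.1 h)) (ho.2 _ h1 _ h2 h3)
  obtain ⟨o, ho⟩ := key fun p => 0 < c p
  obtain ⟨o', ho'⟩ := key fun p => c p < 0
  have h1 : 0 < κ := by
    rw [← hκ o]
    refine Finset.sum_pos' (fun p _ => ?_) ⟨q, Finset.mem_univ _, ?_⟩
    · rcases lt_or_ge 0 (c p) with h | h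
      · exact (mul_pos h ((ho p).1 h)).le
      · exact mul_nonneg_of_nonpos_of_nonpos h ((ho p).2 h.not_gt).le
    · rcases hq.lt_or_gt with h | h
      · exact mul_pos_of_neg_of_neg h ((ho q).2 h.not_gt)
      · exact mul_pos h ((ho q).1 h)
  have h2 : κ ≤ 0 := by
    rw [← hκ o']
    refine Finset.sum_nonpos fun p _ => ?_
    rcases lt_or_ge (c p) 0 with h | h
    · exact (mul_neg_of_neg_of_pos h ((ho' p).1 h)).le
    · exact mul_nonpos_of_nonneg_of_nonpos h ((ho' p).2 h.not_gt).le
  exact h1.not_ge h2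

theorem card_ccwPatterns_le {V : Finset Pt} {T : Finset (Pt × Pt)}
    (hT : ∀ p ∈ T, p.1 ∈ V ∧ p.2 ∈ V ∧ p.1 ≠ p.2) :
    (ccwPatterns V T).card ≤ 1 + T.card + T.card ^ 2 := by
  classical
  have hsub : (ccwPatterns V T).shatterer ⊆
      (Finset.range 3).biUnion fun k => T.powersetCard k := by
    intro s hs
    rw [Finset.mem_shatterer] at hs
    have hc : s.card ≤ 2 := by
      refine card_le_two_of_shatters hT ?_
      convert hs
    obtain ⟨A, hA, hsA⟩ := hs.exists_superset
    exact Finset.mem_biUnion.2 ⟨s.card, Finset.mem_range.2 (by omega), Finset.mem_powersetCard.2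
      ⟨hsA.trans (Finset.mem_powerset.1 (Finset.mem_filter.1 hA).1), rfl⟩⟩
  calc _ ≤ _ := (ccwPatterns V T).card_le_card_shatterer
    _ ≤ _ := Finset.card_le_card hsub
    _ ≤ _ := Finset.card_biUnion_le
    _ ≤ _ := by
      simp only [Finset.card_powersetCard, Finset.sum_range_succ, Finset.sum_range_zero,
        Nat.choose_zero_right, Nat.choose_one_right, zero_add]
      exact Nat.add_le_add_left (Nat.choose_le_pow _ _) _

theorem continuous_toComplex : Continuous toComplex :=
  Complex.equivRealProdCLM.symm.continuous

theorem radius_pos_left {o u v : Pt} (h : crossp (u - o) (v - o) ≠ 0) : 0 < radius o u := by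
  refine radius_pos fun hu => h ?_
  simp [hu, crossp]

theorem radius_pos_right {o u v : Pt} (h : crossp (u - o) (v - o) ≠ 0) : 0 < radius o v := by
  refine radius_pos fun hv => h ?_
  simp [hv, crossp]

theorem dotp_eq_radius_mul_cos (o u v : Pt) : dotp (u - o) (v - o) =
    radius o u * radius o v * Real.cos (angle o v - angle o u) := by
  rw [sub_eq_radius_smul o u, sub_eq_radius_smul o v]
  simp only [dotp, unitVec, Prod.smul_fst, Prod.smul_snd, smul_eq_mul, Real.cos_sub]
  ring

/-- The unoriented angle at `o` between `u` and `v`. -/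
def turn (o u v : Pt) : ℝ := Real.arccos (dotp (u - o) (v - o) / (radius o u * radius o v))

theorem turn_eq_arccos_cos {o u v : Pt} (h : crossp (u - o) (v - o) ≠ 0) :
    turn o u v = Real.arccos (Real.cos (angle o v - angle o u)) := by
  have h1 := radius_pos_left h
  have h2 := radius_pos_right h
  rw [turn, dotp_eq_radius_mul_cos, mul_div_cancel_left₀ _ (mul_pos h1 h2).ne']

theorem pi_lt_angle_sub {o u v : Pt} (h : 0 < crossp (u - o) (v - o))
    (hle : angle o v ≤ angle o u) : Real.pi < angle o u - angle o v := by
  by_contra! hpi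
  have h1 := Real.sin_nonpos_of_nonpos_of_neg_pi_le (x := angle o v - angle o u)
    (by linarith) (by linarith)
  have := mul_pos (radius_pos_left h.ne') (radius_pos_right h.ne')
  rw [crossp_eq_radius_mul_sin] at h
  nlinarith

theorem turn_pos {o u v : Pt} (h : 0 < crossp (u - o) (v - o)) : 0 < turn o u v := by
  refine (Real.arccos_nonneg _).lt_of_ne' fun h0 => ?_
  rw [← turn, turn_eq_arccos_cos h.ne'] at h0
  have h1 : Real.cos (angle o v - angle o u) = 1 :=
    le_antisymm (Real.cos_le_one _) (Real.arccos_eq_zero.1 h0)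
  have h2 := Real.sin_sq_add_cos_sq (angle o v - angle o u)
  rw [h1] at h2
  have h3 : Real.sin (angle o v - angle o u) = 0 := by nlinarith
  rw [crossp_eq_radius_mul_sin, h3, mul_zero] at h
  exact lt_irrefl _ h

theorem turn_eq_ite {o u v : Pt} (h : 0 < crossp (u - o) (v - o)) :
    turn o u v = angle o v - angle o u +
      2 * Real.pi * (if angle o v ≤ angle o u then 1 else 0) := by
  rw [turn_eq_arccos_cos h.ne']
  have h1 : -Real.pi < angle o v := Complex.neg_pi_lt_arg _
  have h2 : angle o u ≤ Real.pi := Complex.arg_le_pi _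
  split_ifs with hle
  · have := pi_lt_angle_sub h hle
    rw [← Real.cos_add_two_pi, Real.arccos_cos (by linarith) (by linarith)]
    ring
  · have := angle_sub_lt_pi h
    rw [Real.arccos_cos (by linarith) (by linarith)]
    ring

theorem continuousAt_turn {o u v : Pt} (h : crossp (u - o) (v - o) ≠ 0) :
    ContinuousAt (fun x => turn x u v) o := by
  have h1 := radius_pos_left h
  have h2 := radius_pos_right h
  have hr : ∀ u, Continuous fun x => radius x u := fun u =>
    (continuous_toComplex.comp (continuous_const.sub continuous_id)).norm
  have hd : Continuous fun x => dotp (u - x) (v - x) := by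
    unfold dotp
    fun_prop
  exact Real.continuous_arccos.continuousAt.comp
    (hd.continuousAt.div ((hr u).mul (hr v)).continuousAt (mul_pos h1 h2).ne')

/-- The indices of the steps of a closed sequence that cross the negative horizontal ray
from `o`. -/
def crossings (f : ℕ → Pt) (n : ℕ) (o : Pt) : Finset ℕ :=
  (Finset.range n).filter fun i => angle o (f (i + 1)) ≤ angle o (f i)

theorem sum_turn_eq {f : ℕ → Pt} {n : ℕ} (hf : f n = f 0) {o : Pt}
    (h : ∀ i < n, 0 < crossp (f i - o) (f (i + 1) - o)) :
    ∑ i ∈ Finset.range n, turn o (f i) (f (i + 1)) = 2 * Real.pi * (crossings f n o).card := by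
  rw [Finset.sum_congr rfl fun i hi => turn_eq_ite (h i (Finset.mem_range.1 hi)),
    Finset.sum_add_distrib, Finset.sum_range_sub (fun i => angle o (f i)), hf, sub_self, zero_add,
    ← Finset.mul_sum, Finset.sum_boole, crossings]

theorem crossings_nonempty {f : ℕ → Pt} {n : ℕ} (hn : 0 < n) (hf : f n = f 0) {o : Pt}
    (h : ∀ i < n, 0 < crossp (f i - o) (f (i + 1) - o)) : (crossings f n o).Nonempty := by
  have h1 : 0 < ∑ i ∈ Finset.range n, turn o (f i) (f (i + 1)) :=
    Finset.sum_pos (fun i hi => turn_pos (h i (Finset.mem_range.1 hi)))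
      (Finset.nonempty_range_iff.2 hn.ne')
  rw [sum_turn_eq hf h] at h1
  rw [← Finset.card_pos, ← Nat.cast_pos (α := ℝ)]
  exact pos_of_mul_pos_right h1 (by positivity)

theorem crossp_sub_combo (u v o o' : Pt) (t : ℝ) :
    crossp (u - (o + t • (o' - o))) (v - (o + t • (o' - o))) =
      (1 - t) * crossp (u - o) (v - o) + t * crossp (u - o') (v - o') := by
  simp only [crossp, Prod.fst_sub, Prod.snd_sub, Prod.fst_add, Prod.snd_add, Prod.smul_fst,
    Prod.smul_snd, smul_eq_mul]
  ring

/-- The number of crossings does not change while `o` moves to the left of all steps. -/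
theorem card_crossings_eq {f : ℕ → Pt} {n : ℕ} (hf : f n = f 0) {o o' : Pt}
    (h : ∀ i < n, 0 < crossp (f i - o) (f (i + 1) - o))
    (h' : ∀ i < n, 0 < crossp (f i - o') (f (i + 1) - o')) :
    (crossings f n o).card = (crossings f n o').card := by
  set γ : ℝ → Pt := fun t => o + t • (o' - o) with hγ
  have hγc : Continuous γ := by fun_prop
  have hpos : ∀ t ∈ Set.Icc (0 : ℝ) 1, ∀ i < n,
      0 < crossp (f i - γ t) (f (i + 1) - γ t) := by
    intro t ht i hi
    rw [hγ, crossp_sub_combo]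
    rcases ht.1.eq_or_lt with h0 | h0
    · simpa [← h0] using h i hi
    · have := mul_pos h0 (h' i hi)
      have := mul_nonneg (sub_nonneg.2 ht.2) (h i hi).le
      linarith
  set F : ℝ → ℝ := fun t =>
    (∑ i ∈ Finset.range n, turn (γ t) (f i) (f (i + 1))) / (2 * Real.pi) with hF
  have hFc : ContinuousOn F (Set.Icc 0 1) := by
    refine ContinuousOn.div_const (continuousOn_finsetSum _ fun i hi t ht => ?_) _
    exact (ContinuousAt.comp (f := γ) (continuousAt_turn
      (hpos t ht i (Finset.mem_range.1 hi)).ne') hγc.continuousAt).continuousWithinAt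
  have hFv : ∀ t ∈ Set.Icc (0 : ℝ) 1, F t = (crossings f n (γ t)).card := by
    intro t ht
    rw [hF]
    simp only
    rw [sum_turn_eq hf (hpos t ht), mul_div_cancel_left₀ _ (by positivity)]
  have hconst := isPreconnected_Icc.constant_of_mapsTo
    Nat.isClosedEmbedding_coe_real.isInducing.isDiscrete_range hFc
    (fun t ht => ⟨(crossings f n (γ t)).card, (hFv t ht).symm⟩)
    (Set.left_mem_Icc.2 zero_le_one) (Set.right_mem_Icc.2 zero_le_one)
  rw [hFv 0 (by simp), hFv 1 (by simp)] at hconst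
  simpa [hγ] using hconst

/-- Every ray from `o` meets `B` in at most one point. -/
def RayUnique (B : Set Pt) (o : Pt) : Prop :=
  ∀ d : Pt, d ≠ 0 → ∀ s t : ℝ, 0 ≤ s → 0 ≤ t → o + s • d ∈ B → o + t • d ∈ B → s • d = t • d

theorem crossp_ne_zero_of_rayUnique {B : Set Pt} {o a b : Pt} (hB : RayUnique B o)
    (hab : segment ℝ a b ⊆ B) (hne : a ≠ b) : crossp (a - o) (b - o) ≠ 0 := by
  intro h0
  have ha := hab (left_mem_segment ℝ a b)
  have hb := hab (right_mem_segment ℝ a b)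
  by_cases hao : a = o
  · subst hao
    have h := hB (b - a) (sub_ne_zero.2 hne.symm) 0 1 le_rfl zero_le_one (by simpa) (by simpa)
    rw [zero_smul, one_smul, eq_comm, sub_eq_zero] at h
    exact hne h.symm
  have hA : a - o ≠ 0 := sub_ne_zero.2 hao
  have hAA : 0 < dotp (a - o) (a - o) := by
    by_contra! h
    refine hA (Prod.ext ?_ ?_) <;> simp only [dotp, Prod.fst_zero, Prod.snd_zero] at h ⊢ <;>
      nlinarith [mul_self_nonneg (a - o).1, mul_self_nonneg (a - o).2]
  set s : ℝ := dotp (a - o) (b - o) / dotp (a - o) (a - o) with hs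
  have hbs : b - o = s • (a - o) := by
    ext
    · rw [Prod.smul_fst, smul_eq_mul, hs, div_mul_eq_mul_div, eq_div_iff hAA.ne']
      simp only [dotp, crossp] at h0 ⊢
      linear_combination -(a - o).2 * h0
    · rw [Prod.smul_snd, smul_eq_mul, hs, div_mul_eq_mul_div, eq_div_iff hAA.ne']
      simp only [dotp, crossp] at h0 ⊢
      linear_combination (a - o).1 * h0
  rcases le_or_gt 0 s with hs0 | hs0
  · have h := hB (a - o) hA 1 s zero_le_one hs0 (by simpa) (by rw [← hbs]; simpa)
    rw [one_smul, ← hbs] at h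
    exact hne (sub_left_injective h)
  · have ho : o ∈ B := by
      refine hab ⟨-s / (1 - s), 1 / (1 - s), ?_, ?_, ?_, ?_⟩
      · exact div_nonneg (by linarith) (by linarith)
      · exact div_nonneg (by linarith) (by linarith)
      · rw [← add_div, div_eq_one_iff_eq (by linarith)]
        ring
      · have hb' : b = o + s • (a - o) := by rw [← hbs]; simp
        have h1 : 1 - s ≠ 0 := by linarith
        rw [hb']
        ext <;>
        · simp only [Prod.fst_add, Prod.snd_add, Prod.smul_fst, Prod.smul_snd, Prod.fst_sub,
            Prod.snd_sub, smul_eq_mul]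
          field_simp
          ring
    have h := hB (a - o) hA 1 0 zero_le_one le_rfl (by simpa) (by simpa)
    rw [one_smul, zero_smul] at h
    exact hA h

theorem exists_small_scalars {p q K : ℝ} (h : 0 < p * q) :
    ∃ s t : ℝ, 0 < s ∧ s < 1 ∧ 0 < t ∧ t < 1 ∧ s * p - t * q + s * t * K = 0 := by
  have hq : q ≠ 0 := right_ne_zero_of_mul h.ne'
  set ρ := p / q with hρ
  set r := K / q with hr
  have hρ0 : 0 < ρ := by
    rw [hρ, show p / q = p * q / q ^ 2 by field_simp]
    positivity
  have hr0 := abs_nonneg r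
  set m := 1 + ρ + |r| with hm
  have hm0 : 0 < m := by positivity
  set s := 1 / (2 * m) with hs
  have hsm : s * m = 1 / 2 := by rw [hs]; field_simp
  have hs0 : 0 < s := by positivity
  have hsr : 1 / 2 ≤ 1 - s * r := by
    nlinarith [le_abs_self r, mul_pos hs0 hρ0, mul_le_mul_of_nonneg_left (le_abs_self r) hs0.le]
  have hden : 0 < 1 - s * r := by linarith
  refine ⟨s, s * ρ / (1 - s * r), hs0, by nlinarith [mul_nonneg hs0.le hr0, mul_pos hs0 hρ0],
    by positivity, ?_, ?_⟩
  · rw [div_lt_one hden]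
    nlinarith [mul_nonneg hs0.le hr0]
  · have hp : p = ρ * q := by rw [hρ]; field_simp
    have hK : K = r * q := by rw [hr]; field_simp
    have hden' := hden.ne'
    rw [hp, hK]
    field_simp
    ring

theorem crossp_mul_pos_of_rayUnique {B : Set Pt} {o a v b : Pt} (hB : RayUnique B o)
    (hav : segment ℝ a v ⊆ B) (hvb : segment ℝ v b ⊆ B) (hne : a ≠ v) (hne' : v ≠ b)
    (hdisj : openSegment ℝ a v ∩ openSegment ℝ v b = ∅) :
    0 < crossp (a - o) (v - o) * crossp (v - o) (b - o) := by
  have h1 := crossp_ne_zero_of_rayUnique hB hav hne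
  have h2 := crossp_ne_zero_of_rayUnique hB hvb hne'
  by_contra! hle
  set p := crossp (a - o) (v - o) with hp
  set q := crossp (b - o) (v - o) with hq
  have hq' : crossp (v - o) (b - o) = -q := crossp_comm _ _
  have hpq : 0 < p * q := by
    refine lt_of_le_of_ne (by rw [hq'] at hle; linarith) (mul_ne_zero h1 ?_).symm
    rwa [hq', neg_ne_zero] at h2
  obtain ⟨s, t, hs0, hs1, ht0, ht1, hst⟩ :=
    exists_small_scalars (K := crossp (a - v) (b - v)) hpq
  set X := v + s • (a - v) with hX
  set Y := v + t • (b - v) with hY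
  have hXm : X ∈ openSegment ℝ a v :=
    ⟨s, 1 - s, hs0, by linarith, by ring, by rw [hX]; module⟩
  have hYm : Y ∈ openSegment ℝ v b :=
    ⟨1 - t, t, by linarith, ht0, by ring, by rw [hY]; module⟩
  have hXv : crossp (X - o) (v - o) = s * p := by
    simp only [hX, hp, crossp, Prod.fst_add, Prod.snd_add, Prod.smul_fst, Prod.smul_snd,
      Prod.fst_sub, Prod.snd_sub, smul_eq_mul]
    ring
  have hYv : crossp (Y - o) (v - o) = t * q := by
    simp only [hY, hq, crossp, Prod.fst_add, Prod.snd_add, Prod.smul_fst, Prod.smul_snd,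
      Prod.fst_sub, Prod.snd_sub, smul_eq_mul]
    ring
  have hXY : crossp (X - o) (Y - o) = 0 := by
    rw [← hst]
    simp only [hX, hY, hp, hq, crossp, Prod.fst_add, Prod.snd_add, Prod.smul_fst, Prod.smul_snd,
      Prod.fst_sub, Prod.snd_sub, smul_eq_mul]
    ring
  have hq0 : q ≠ 0 := right_ne_zero_of_mul hpq.ne'
  have hYv0 : crossp (Y - o) (v - o) ≠ 0 := by rw [hYv]; exact mul_ne_zero ht0.ne' hq0
  set l := s * p / (t * q) with hl
  have hl0 : 0 ≤ l := by
    rw [hl, show s * p / (t * q) = s / t * (p * q / q ^ 2) by field_simp]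
    positivity
  have hlX : X - o = l • (Y - o) := by
    have e : X - o = (crossp (X - o) (v - o) / crossp (Y - o) (v - o)) • (Y - o) := by
      ext
      · rw [Prod.smul_fst, smul_eq_mul, div_mul_eq_mul_div, eq_div_iff hYv0]
        simp only [crossp] at hXY ⊢
        linear_combination -(v - o).1 * hXY
      · rw [Prod.smul_snd, smul_eq_mul, div_mul_eq_mul_div, eq_div_iff hYv0]
        simp only [crossp] at hXY ⊢
        linear_combination -(v - o).2 * hXY
    rwa [hXv, hYv] at e
  have hYo : Y - o ≠ 0 := by
    intro h0
    rw [h0] at hYv0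
    exact hYv0 (by simp [crossp])
  have h := hB (Y - o) hYo l 1 hl0 zero_le_one
    (by rw [← hlX, add_sub_cancel]; exact hav (openSegment_subset_segment _ _ _ hXm))
    (by rw [one_smul, add_sub_cancel]; exact hvb (openSegment_subset_segment _ _ _ hYm))
  rw [← hlX, one_smul] at h
  exact Set.notMem_empty X (hdisj.subset ⟨hXm, sub_left_injective h ▸ hYm⟩)

/-- The periodic sequence of vertices of a cycle. -/
def cyc (L : List Pt) (i : ℕ) : Pt := L.getD (i % L.length) 0

theorem cyc_of_lt {L : List Pt} {i : ℕ} (h : i < L.length) : cyc L i = L[i] := by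
  rw [cyc, Nat.mod_eq_of_lt h, List.getD_eq_getElem _ _ h]

theorem cyc_mod (L : List Pt) (i : ℕ) : cyc L (i % L.length) = cyc L i := by
  rw [cyc, cyc, Nat.mod_mod]

theorem cyc_length (L : List Pt) : cyc L L.length = cyc L 0 := by
  rw [cyc, cyc, Nat.mod_self, Nat.zero_mod]

theorem cyc_succ_mod (L : List Pt) (i : ℕ) : cyc L (i % L.length + 1) = cyc L (i + 1) := by
  rw [cyc, cyc, Nat.mod_add_mod]

theorem mem_cyclePairs {L : List Pt} {p : Pt × Pt} :
    p ∈ cyclePairs L ↔ ∃ i < L.length, p = (cyc L i, cyc L (i + 1)) := by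
  rw [cyclePairs, List.mem_iff_getElem]
  constructor
  · rintro ⟨i, hi, rfl⟩
    have h : i < L.length := by
      rw [List.length_zip] at hi
      omega
    refine ⟨i, h, ?_⟩
    rw [List.getElem_zip, List.getElem_rotate, cyc_of_lt h, ← cyc_mod L (i + 1), cyc_of_lt]
  · rintro ⟨i, h, rfl⟩
    refine ⟨i, by simpa using h, ?_⟩
    rw [List.getElem_zip, List.getElem_rotate, cyc_of_lt h, ← cyc_mod L (i + 1), cyc_of_lt]

theorem cyc_mem_cyclePairs {L : List Pt} (hL : 0 < L.length) (i : ℕ) :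
    (cyc L i, cyc L (i + 1)) ∈ cyclePairs L :=
  mem_cyclePairs.2 ⟨i % L.length, Nat.mod_lt _ hL, by rw [cyc_mod, cyc_succ_mod]⟩

theorem cyc_inj {L : List Pt} (hL : L.Nodup) {i j : ℕ} (hi : i < L.length) (hj : j < L.length)
    (h : cyc L i = cyc L j) : i = j := by
  rw [cyc_of_lt hi, cyc_of_lt hj] at h
  exact (hL.getElem_inj_iff).1 h

theorem swap_mem_cyclePairs_of_mem_reverse {L : List Pt} {p : Pt × Pt}
    (hp : p ∈ cyclePairs L.reverse) : p.swap ∈ cyclePairs L := by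
  obtain ⟨i, hi, rfl⟩ := mem_cyclePairs.1 hp
  rw [List.length_reverse] at hi
  have hrev : ∀ j < L.length, cyc L.reverse j = cyc L (L.length - 1 - j) := by
    intro j hj
    rw [cyc_of_lt (by simpa using hj), cyc_of_lt (by omega), List.getElem_reverse]
  rw [mem_cyclePairs]
  rcases Nat.lt_or_ge (i + 1) L.length with h | h
  · refine ⟨L.length - 1 - (i + 1), by omega, ?_⟩
    rw [hrev i hi, hrev (i + 1) h, Prod.swap_prod_mk]
    congr 2
    omega
  · refine ⟨L.length - 1, by omega, ?_⟩
    obtain rfl : i = L.length - 1 := by omega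
    have e : L.length - 1 + 1 = L.length := by omega
    have e' := cyc_length L.reverse
    rw [List.length_reverse] at e'
    rw [hrev _ hi, e, e', hrev 0 (by omega), cyc_length, Prod.swap_prod_mk]
    simp

theorem mem_cyclePairs_reverse {L : List Pt} {p : Pt × Pt} :
    p ∈ cyclePairs L.reverse ↔ p.swap ∈ cyclePairs L := by
  refine ⟨swap_mem_cyclePairs_of_mem_reverse, fun h => ?_⟩
  have := swap_mem_cyclePairs_of_mem_reverse (L := L.reverse) (p := p.swap) (by simpa using h)
  simpa using this

theorem mem_cycleEdgeSet {L : List Pt} {e : Sym2 Pt} :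
    e ∈ cycleEdgeSet L ↔ ∃ p ∈ cyclePairs L, s(p.1, p.2) = e := by
  simp [cycleEdgeSet]

theorem cycleEdgeSet_reverse (L : List Pt) : cycleEdgeSet L.reverse = cycleEdgeSet L := by
  have key : ∀ L e, e ∈ cycleEdgeSet L → e ∈ cycleEdgeSet L.reverse := by
    intro L e he
    obtain ⟨p, hp, rfl⟩ := mem_cycleEdgeSet.1 he
    exact mem_cycleEdgeSet.2 ⟨p.swap, mem_cyclePairs_reverse.2 (by simpa using hp), Sym2.eq_swap⟩
  ext e
  exact ⟨fun h => by simpa using key _ _ h, key L e⟩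

theorem segment_subset_cycleBody {L : List Pt} {p : Pt × Pt} (hp : p ∈ cyclePairs L) :
    segment ℝ p.1 p.2 ⊆ cycleBody L :=
  Set.subset_biUnion_of_mem (u := fun p : Pt × Pt => segment ℝ p.1 p.2) hp

theorem cycleBody_reverse_subset (L : List Pt) : cycleBody L.reverse ⊆ cycleBody L := by
  refine Set.iUnion₂_subset fun p hp => ?_
  rw [segment_symm]
  exact segment_subset_cycleBody (mem_cyclePairs_reverse.1 hp)

theorem IsCycleIn.reverse {G : PSLG} {L : List Pt} (h : IsCycleIn G L) :
    IsCycleIn G L.reverse := by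
  refine ⟨by simpa using h.1, List.nodup_reverse.2 h.2.1, fun p hp => ?_⟩
  rw [Sym2.eq_swap]
  exact h.2.2 _ (mem_cyclePairs_reverse.1 hp)

theorem IsStarShapedPolygon.exists_rayUnique {G : PSLG} {L : List Pt}
    (h : IsStarShapedPolygon G L) : ∃ o, RayUnique (cycleBody L) o := by
  obtain ⟨-, o, ho⟩ := h
  refine ⟨o, fun d hd s t hs ht h1 h2 => ?_⟩
  exact add_left_cancel ((ho d hd).unique ⟨h1, s, hs, rfl⟩ ⟨h2, t, ht, rfl⟩)

theorem IsCycleIn.length_pos {G : PSLG} {L : List Pt} (h : IsCycleIn G L) : 0 < L.length :=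
  lt_of_lt_of_le (by norm_num) h.1

theorem IsCycleIn.cyc_mem {G : PSLG} {L : List Pt} (h : IsCycleIn G L) (i : ℕ) :
    s(cyc L i, cyc L (i + 1)) ∈ G.E :=
  h.2.2 _ (cyc_mem_cyclePairs h.length_pos i)

theorem IsCycleIn.edge_ne {G : PSLG} {L : List Pt} (h : IsCycleIn G L) (i : ℕ) :
    s(cyc L i, cyc L (i + 1)) ≠ s(cyc L (i + 1), cyc L (i + 2)) := by
  have hne := (G.valid.1 _ _ (h.cyc_mem i)).2.2
  intro he
  rcases Sym2.eq_iff.1 he with ⟨h1, -⟩ | ⟨h1, -⟩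
  · exact hne h1
  · have hn := h.1
    have hpos := h.length_pos
    rw [← cyc_mod L i, ← cyc_mod L (i + 2)] at h1
    have hmod := cyc_inj h.2.1 (Nat.mod_lt _ hpos) (Nat.mod_lt _ hpos) h1
    have h2 : (L.length : ℤ) ∣ ((i + 2 : ℕ) : ℤ) - (i : ℕ) := (Nat.modEq_iff_dvd).1 hmod
    have h3 : (L.length : ℤ) ∣ 2 := by simpa using h2
    have := Int.le_of_dvd (by norm_num) h3
    omega

theorem IsCycleIn.crossp_mul_pos {G : PSLG} {L : List Pt} (h : IsCycleIn G L) {o : Pt}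
    (ho : RayUnique (cycleBody L) o) (i : ℕ) :
    0 < crossp (cyc L 0 - o) (cyc L 1 - o) * crossp (cyc L i - o) (cyc L (i + 1) - o) := by
  have hseg : ∀ i, segment ℝ (cyc L i) (cyc L (i + 1)) ⊆ cycleBody L := fun i =>
    segment_subset_cycleBody (cyc_mem_cyclePairs h.length_pos i)
  have hne : ∀ i, cyc L i ≠ cyc L (i + 1) := fun i => (G.valid.1 _ _ (h.cyc_mem i)).2.2
  induction i with
  | zero => exact mul_self_pos.2 (crossp_ne_zero_of_rayUnique ho (hseg 0) (hne 0))
  | succ i ih =>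
    have h1 := crossp_mul_pos_of_rayUnique ho (hseg i) (hseg (i + 1)) (hne i) (hne (i + 1))
      (G.valid.2.2 _ _ _ _ (h.cyc_mem i) (h.cyc_mem (i + 1)) (h.edge_ne i))
    exact pos_of_mul_pos_right (a := crossp (cyc L i - o) (cyc L (i + 1) - o) ^ 2)
      (by nlinarith [mul_pos ih h1]) (sq_nonneg _)

/-- A star-shaped polygon can be listed counterclockwise as seen from its centre. -/
theorem IsStarShapedPolygon.exists_ccw {G : PSLG} {L : List Pt} (h : IsStarShapedPolygon G L) :
    ∃ L' o, IsCycleIn G L' ∧ cycleEdgeSet L' = cycleEdgeSet L ∧ RayUnique (cycleBody L') o ∧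
      ∀ p ∈ cyclePairs L', 0 < crossp (p.1 - o) (p.2 - o) := by
  obtain ⟨o, ho⟩ := h.exists_rayUnique
  have hc := h.1
  have key := hc.crossp_mul_pos ho
  rcases lt_trichotomy (crossp (cyc L 0 - o) (cyc L 1 - o)) 0 with h0 | h0 | h0
  · refine ⟨L.reverse, o, hc.reverse, cycleEdgeSet_reverse L, ?_, fun p hp => ?_⟩
    · intro d hd s t hs ht h1 h2
      exact ho d hd s t hs ht (cycleBody_reverse_subset L h1) (cycleBody_reverse_subset L h2)
    · obtain ⟨i, -, hi⟩ := mem_cyclePairs.1 (mem_cyclePairs_reverse.1 hp)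
      have h1 := neg_of_mul_pos_right (key i) h0.le
      have e1 : p.2 = cyc L i := congrArg Prod.fst hi
      have e2 : p.1 = cyc L (i + 1) := congrArg Prod.snd hi
      rw [e1, e2, crossp_comm]
      linarith
  · simpa [h0] using key 0
  · refine ⟨L, o, hc, rfl, ho, fun p hp => ?_⟩
    obtain ⟨i, -, rfl⟩ := mem_cyclePairs.1 hp
    exact pos_of_mul_pos_right (key i) h0.le

theorem exists_crossing_point {o a b : Pt} (h : 0 < crossp (a - o) (b - o))
    (hle : angle o b ≤ angle o a) : ∃ r : ℝ, 0 ≤ r ∧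
      (o + r • ((-1, 0) : Pt) = a ∨ o + r • ((-1, 0) : Pt) ∈ openSegment ℝ a b) := by
  have hpi := pi_lt_angle_sub h hle
  have h1 : -Real.pi < angle o b := Complex.neg_pi_lt_arg _
  have h2 : angle o a ≤ Real.pi := Complex.arg_le_pi _
  have hA : 0 ≤ (a - o).2 := Complex.arg_nonneg_iff.1 (show 0 ≤ angle o a by linarith)
  have hB : (b - o).2 < 0 := Complex.arg_neg_iff.1 (show angle o b < 0 by linarith)
  rcases hA.eq_or_lt with h0 | h0
  · have hA1 : (a - o).1 < 0 := by
      rw [crossp, ← h0, zero_mul, sub_zero] at h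
      exact neg_of_mul_pos_left h hB.le
    refine ⟨-(a - o).1, by linarith, Or.inl ?_⟩
    rw [Prod.snd_sub] at h0
    ext
    · simp
    · simp only [Prod.snd_add, Prod.smul_snd, smul_zero]
      linarith
  · have e1 : crossp (-1, 0) (b - o) = -(b - o).2 := by simp [crossp]
    have e2 : crossp (a - o) (-1, 0) = (a - o).2 := by simp [crossp]
    have hs := polarCurve_smul_mem_openSegment (u := a) (v := b) (o := o) (d := (-1, 0))
      (by rw [e1]; linarith) (by rw [e2]; exact h0)
    refine ⟨_, inv_nonneg.2 (div_nonneg ?_ h.le), Or.inr hs⟩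
    rw [crossp_sub_right _ o, e1, e2]
    linarith

theorem IsCycleIn.card_crossings_eq_one {G : PSLG} {L : List Pt} (h : IsCycleIn G L) {o : Pt}
    (ho : RayUnique (cycleBody L) o)
    (hpos : ∀ p ∈ cyclePairs L, 0 < crossp (p.1 - o) (p.2 - o)) :
    (crossings (cyc L) L.length o).card = 1 := by
  have hp : ∀ i, 0 < crossp (cyc L i - o) (cyc L (i + 1) - o) := fun i =>
    hpos _ (cyc_mem_cyclePairs h.length_pos i)
  refine le_antisymm (Finset.card_le_one.2 fun i hi j hj => ?_)
    (Finset.card_pos.2 (crossings_nonempty h.length_pos (cyc_length L) fun i _ => hp i))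
  rw [crossings, Finset.mem_filter, Finset.mem_range] at hi hj
  obtain ⟨r, hr, hri⟩ := exists_crossing_point (hp i) hi.2
  obtain ⟨s, hs, hsj⟩ := exists_crossing_point (hp j) hj.2
  have hbody : ∀ (k : ℕ) (x : Pt),
      (x = cyc L k ∨ x ∈ openSegment ℝ (cyc L k) (cyc L (k + 1))) → x ∈ cycleBody L := by
    rintro k x hx
    refine segment_subset_cycleBody (cyc_mem_cyclePairs h.length_pos k) ?_
    rcases hx with rfl | hx
    · exact left_mem_segment ℝ _ _
    · exact openSegment_subset_segment _ _ _ hx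
  have heq := ho (-1, 0) (by simp) r s hr hs (hbody i _ hri) (hbody j _ hsj)
  rw [heq] at hri
  set x := o + s • ((-1, 0) : Pt)
  have hV : ∀ k, cyc L k ∈ G.V := fun k => (G.valid.1 _ _ (h.cyc_mem k)).1
  rcases hri with hri | hri <;> rcases hsj with hsj | hsj
  · exact cyc_inj h.2.1 hi.1 hj.1 (hri.symm.trans hsj)
  · exact absurd (hri ▸ hsj) (G.valid.2.1 _ _ (h.cyc_mem j) _ (hV i))
  · exact absurd (hsj ▸ hri) (G.valid.2.1 _ _ (h.cyc_mem i) _ (hV j))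
  · by_cases he : s(cyc L i, cyc L (i + 1)) = s(cyc L j, cyc L (j + 1))
    · rcases Sym2.eq_iff.1 he with ⟨h1, -⟩ | ⟨h1, h2⟩
      · exact cyc_inj h.2.1 hi.1 hj.1 h1
      · have h3 := hp i
        rw [h1, h2, crossp_comm] at h3
        linarith [hp j]
    · exact absurd (Set.mem_inter hri hsj)
        (G.valid.2.2 _ _ _ _ (h.cyc_mem i) (h.cyc_mem j) he ▸ Set.notMem_empty x)

theorem cyc_rotate {L : List Pt} (k i : ℕ) : cyc (L.rotate k) i = cyc L (i + k) := by
  rcases L.length.eq_zero_or_pos with h | h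
  · rw [List.length_eq_zero_iff] at h
    simp [h, cyc]
  · rw [← cyc_mod, List.length_rotate, cyc_of_lt (by simpa using Nat.mod_lt i h),
      List.getElem_rotate, ← cyc_of_lt, cyc_mod, cyc, cyc, Nat.mod_add_mod]

theorem mem_cyclePairs_of_mem_rotate {L : List Pt} {k : ℕ} {p : Pt × Pt}
    (hp : p ∈ cyclePairs (L.rotate k)) : p ∈ cyclePairs L := by
  obtain ⟨i, hi, rfl⟩ := mem_cyclePairs.1 hp
  rw [List.length_rotate] at hi
  rw [cyc_rotate, cyc_rotate, show i + 1 + k = i + k + 1 by ring]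
  exact cyc_mem_cyclePairs (by omega) _

theorem cycleEdgeSet_rotate (L : List Pt) (k : ℕ) :
    cycleEdgeSet (L.rotate k) = cycleEdgeSet L := by
  have key : ∀ (L : List Pt) k e, e ∈ cycleEdgeSet (L.rotate k) → e ∈ cycleEdgeSet L := by
    intro L k e he
    obtain ⟨p, hp, rfl⟩ := mem_cycleEdgeSet.1 he
    exact mem_cycleEdgeSet.2 ⟨p, mem_cyclePairs_of_mem_rotate hp, rfl⟩
  obtain ⟨m, hm⟩ := (List.IsRotated.symm ⟨k, rfl⟩ : L.rotate k ~r L)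
  ext e
  refine ⟨key L k e, fun he => key (L.rotate k) m e ?_⟩
  rwa [hm]

/-- Cutting a counterclockwise star-shaped polygon at the negative horizontal ray from `o'`
gives a path of the polar drawing. -/
theorem IsCycleIn.exists_polar_path {G : PSLG} {L : List Pt} (h : IsCycleIn G L) {o o' : Pt}
    (ho : RayUnique (cycleBody L) o)
    (hpos : ∀ p ∈ cyclePairs L, 0 < crossp (p.1 - o) (p.2 - o))
    (hpos' : ∀ p ∈ cyclePairs L, 0 < crossp (p.1 - o') (p.2 - o')) :
    ∃ a v M, (v :: M).IsChain (G.PolarAdj o') ∧ (v :: M).getLast? = some a ∧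
      (a, v) ∈ cyclePairs L ∧ cycleEdgeSet (v :: M) = cycleEdgeSet L := by
  have hL := h.length_pos
  have hp' : ∀ i, 0 < crossp (cyc L i - o') (cyc L (i + 1) - o') := fun i =>
    hpos' _ (cyc_mem_cyclePairs hL i)
  have hcard : (crossings (cyc L) L.length o').card = 1 :=
    (card_crossings_eq (cyc_length L) (fun i _ => hpos _ (cyc_mem_cyclePairs hL i))
      fun i _ => hp' i) ▸ h.card_crossings_eq_one ho hpos
  obtain ⟨k, hk⟩ := Finset.card_eq_one.1 hcard
  have hkL : k < L.length := by
    have : k ∈ crossings (cyc L) L.length o' := by rw [hk]; exact Finset.mem_singleton_self k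
    exact Finset.mem_range.1 (Finset.mem_filter.1 this).1
  have hlt : ∀ i, i % L.length ≠ k → angle o' (cyc L i) < angle o' (cyc L (i + 1)) := by
    intro i hi
    by_contra! hle
    refine hi (Finset.mem_singleton.1 (hk ▸ Finset.mem_filter.2 ⟨?_, ?_⟩))
    · exact Finset.mem_range.2 (Nat.mod_lt _ hL)
    · rwa [cyc_mod, cyc_succ_mod]
  have hlen : (L.rotate (k + 1)).length = L.length := List.length_rotate ..
  obtain ⟨v, M, hM⟩ := List.exists_cons_of_length_pos (hlen ▸ hL)
  have hget : ∀ i (hi : i < (v :: M).length), (v :: M)[i] = cyc L (i + (k + 1)) := by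
    intro i hi
    rw [← cyc_of_lt hi, ← hM, cyc_rotate]
  have hlen' : (v :: M).length = L.length := hM ▸ hlen
  refine ⟨cyc L k, v, M, ?_, ?_, ?_, ?_⟩
  · rw [List.isChain_iff_getElem]
    intro i hi
    rw [hget, hget, show i + 1 + (k + 1) = i + (k + 1) + 1 by ring]
    refine ⟨h.cyc_mem _, hp' _, hlt _ fun hmod => ?_⟩
    have h1 : (i + 1 + k) ≡ 0 + k [MOD L.length] := by
      rwa [Nat.ModEq, zero_add, Nat.mod_eq_of_lt hkL, add_assoc, add_comm 1 k]
    have h2 := Nat.ModEq.add_right_cancel' k h1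
    rw [Nat.ModEq, Nat.mod_eq_of_lt (hlen' ▸ hi), Nat.zero_mod] at h2
    omega
  · rw [List.getLast?_eq_getElem?, List.getElem?_eq_getElem (by omega), hget, hlen',
      show L.length - 1 + (k + 1) = L.length + k by omega, ← cyc_mod, Nat.add_mod_left, cyc_mod]
  · have h0 := hget 0 (by simp)
    rw [List.getElem_cons_zero, zero_add] at h0
    rw [h0]
    exact cyc_mem_cyclePairs hL k
  · rw [← hM, cycleEdgeSet_rotate]

/-- One arc for each edge of `G`. -/
def PSLG.arcs (G : PSLG) : Finset (Pt × Pt) := by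
  classical exact G.E.image Quot.out

/-- Both arcs of each edge of `G`. -/
def PSLG.darts (G : PSLG) : Finset (Pt × Pt) := by
  classical exact G.arcs ∪ G.arcs.image Prod.swap

theorem PSLG.mem_edges_of_mem_arcs {G : PSLG} {p : Pt × Pt} (hp : p ∈ G.arcs) :
    s(p.1, p.2) ∈ G.E := by
  classical
  obtain ⟨e, he, rfl⟩ := Finset.mem_image.1 hp
  have h : s((Quot.out e).1, (Quot.out e).2) = e := Quot.out_eq e
  rwa [h]

theorem PSLG.mem_arcs_or_swap_mem {G : PSLG} {p : Pt × Pt} (hp : s(p.1, p.2) ∈ G.E) :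
    p ∈ G.arcs ∨ p.swap ∈ G.arcs := by
  classical
  have hm : Quot.out s(p.1, p.2) ∈ G.arcs := Finset.mem_image_of_mem _ hp
  have h : s((Quot.out s(p.1, p.2)).1, (Quot.out s(p.1, p.2)).2) = s(p.1, p.2) := Quot.out_eq _
  rcases Sym2.eq_iff.1 h with ⟨h1, h2⟩ | ⟨h1, h2⟩
  · exact Or.inl (Prod.ext h1 h2 ▸ hm)
  · refine Or.inr ?_
    rwa [← show Quot.out s(p.1, p.2) = p.swap from Prod.ext h1 h2]

theorem PSLG.mem_darts {G : PSLG} {p : Pt × Pt} (hp : s(p.1, p.2) ∈ G.E) : p ∈ G.darts := by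
  classical
  rcases G.mem_arcs_or_swap_mem hp with h | h
  · exact Finset.mem_union_left _ h
  · exact Finset.mem_union_right _ (Finset.mem_image.2 ⟨_, h, Prod.swap_swap p⟩)

theorem PSLG.mem_edges_of_mem_darts {G : PSLG} {p : Pt × Pt} (hp : p ∈ G.darts) :
    s(p.1, p.2) ∈ G.E := by
  classical
  rcases Finset.mem_union.1 hp with h | h
  · exact mem_edges_of_mem_arcs h
  · obtain ⟨q, hq, rfl⟩ := Finset.mem_image.1 h
    rw [Sym2.eq_swap]
    exact mem_edges_of_mem_arcs hq

theorem PSLG.card_arcs_le (G : PSLG) : G.arcs.card ≤ 3 * G.V.card := by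
  classical
  exact Finset.card_image_le.trans G.card_edges_le

theorem PSLG.card_darts_le (G : PSLG) : G.darts.card ≤ 6 * G.V.card := by
  classical
  have h1 : G.darts.card ≤ _ := Finset.card_union_le _ _
  have h2 : (G.arcs.image Prod.swap).card ≤ G.arcs.card := Finset.card_image_le
  have h3 := G.card_arcs_le
  omega

theorem crossp_pos_of_ccwPattern_eq {G : PSLG} {o o' : Pt} (ho' : InGeneralPosition G.V o')
    (h : ccwPattern G.arcs o' = ccwPattern G.arcs o) {p : Pt × Pt} (hp : s(p.1, p.2) ∈ G.E)
    (hpos : 0 < crossp (p.1 - o) (p.2 - o)) : 0 < crossp (p.1 - o') (p.2 - o') := by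
  classical
  rcases G.mem_arcs_or_swap_mem hp with hm | hm
  · have h1 : p ∈ ccwPattern G.arcs o := Finset.mem_filter.2 ⟨hm, hpos⟩
    rw [← h] at h1
    exact (Finset.mem_filter.1 h1).2
  · obtain ⟨h1, h2, h3⟩ := G.valid.1 _ _ hp
    refine (ho'.2 _ h1 _ h2 h3).lt_or_gt.resolve_left fun hneg => ?_
    rw [crossp_comm] at hneg
    have h4 : p.swap ∈ ccwPattern G.arcs o' := Finset.mem_filter.2 ⟨hm, by simpa using hneg⟩
    rw [h] at h4
    have h5 : 0 < crossp (p.2 - o) (p.1 - o) := (Finset.mem_filter.1 h4).2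
    rw [crossp_comm] at h5
    linarith

/-- The edge sets of the cycles that arise by closing up, with the arc `p`, a path of the polar
drawing of `G` around `o`. -/
def PSLG.polarCycles (G : PSLG) (o : Pt) (p : Pt × Pt) : Set (Finset (Sym2 Pt)) :=
  (fun M => cycleEdgeSet (p.2 :: M)) ''
    {M | (p.2 :: M).IsChain (G.PolarAdj o) ∧ (p.2 :: M).getLast? = some p.1}

theorem PSLG.finite_polarCycles {G : PSLG} {o : Pt} (ho : InGeneralPosition G.V o)
    {p : Pt × Pt} (hp : p.2 ∈ G.V) : (G.polarCycles o p).Finite :=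
  ((G.polarDrawing o ho).finite_tails p.1 hp).image _

theorem PSLG.ncard_polarCycles_le {α : ℝ} (hα : 1 < α) (h3 : α ^ 3 = α ^ 2 + α + 1) {G : PSLG}
    {o : Pt} (ho : InGeneralPosition G.V o) {p : Pt × Pt} (hp : p.2 ∈ G.V) :
    ((G.polarCycles o p).ncard : ℝ) ≤ α * α ^ G.V.card :=
  (Nat.cast_le.2 (Set.ncard_image_le ((G.polarDrawing o ho).finite_tails p.1 hp))).trans
    ((G.polarDrawing o ho).ncard_tails_le hα h3 p.1 hp)

theorem IsStarShapedPolygon.exists_mem_polarCycles {G : PSLG} {L : List Pt}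
    (h : IsStarShapedPolygon G L) : ∃ A ∈ ccwPatterns G.V G.arcs,
      ∀ c, InGeneralPosition G.V c → ccwPattern G.arcs c = A →
        ∃ p ∈ G.darts, cycleEdgeSet L ∈ G.polarCycles c p := by
  obtain ⟨L', o, hc, hE, ho, hpos⟩ := h.exists_ccw
  have hev : ∀ᶠ x in nhds o, ∀ p ∈ cyclePairs L', 0 < crossp (p.1 - x) (p.2 - x) := by
    have := (List.finite_toSet (cyclePairs L'))
    refine (Filter.eventually_all_finite this).2 fun p hp => ?_
    have hcont : Continuous fun x => crossp (p.1 - x) (p.2 - x) := by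
      unfold crossp
      fun_prop
    exact hcont.continuousAt.eventually_const_lt (hpos p hp)
  obtain ⟨o', ho', hpos'⟩ := exists_inGeneralPosition G.V hev
  refine ⟨_, mem_ccwPatterns.2 ⟨o', ho', rfl⟩, fun c hcV hcA => ?_⟩
  obtain ⟨a, v, M, hM, hlast, hav, hML⟩ := hc.exists_polar_path ho hpos fun p hp =>
    crossp_pos_of_ccwPattern_eq hcV hcA (hc.2.2 p hp) (hpos' p hp)
  exact ⟨(a, v), G.mem_darts (hc.2.2 _ hav), M, ⟨hM, hlast⟩, hML.trans hE⟩

theorem starCount_le {α : ℝ} (hα : 1 < α) (h3 : α ^ 3 = α ^ 2 + α + 1) (G : PSLG) :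
    (starCount G : ℝ) ≤
      (1 + G.arcs.card + G.arcs.card ^ 2) * (G.darts.card * (α * α ^ G.V.card)) := by
  choose! c hcV hcA using fun A (hA : A ∈ ccwPatterns G.V G.arcs) => mem_ccwPatterns.1 hA
  set 𝒜 := ccwPatterns G.V G.arcs
  set U : Set (Finset (Sym2 Pt)) := ⋃ q ∈ 𝒜 ×ˢ G.darts, G.polarCycles (c q.1) q.2
  have hmem : ∀ q ∈ 𝒜 ×ˢ G.darts, InGeneralPosition G.V (c q.1) ∧ q.2.2 ∈ G.V := fun q hq =>
    ⟨hcV _ (Finset.mem_product.1 hq).1,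
      (G.valid.1 _ _ (G.mem_edges_of_mem_darts (Finset.mem_product.1 hq).2)).2.1⟩
  have hU : U.Finite := (𝒜 ×ˢ G.darts).finite_toSet.biUnion fun q hq =>
    G.finite_polarCycles (hmem q hq).1 (hmem q hq).2
  have h1 : starCount G ≤ U.ncard := by
    refine Set.ncard_le_ncard ?_ hU
    rintro _ ⟨L, hL, rfl⟩
    obtain ⟨A, hA, h⟩ := hL.exists_mem_polarCycles
    obtain ⟨p, hp, hLp⟩ := h (c A) (hcV A hA) (hcA A hA)
    exact Set.mem_biUnion (Finset.mk_mem_product hA hp) hLp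
  have h2 : U.ncard ≤ ∑ q ∈ 𝒜 ×ˢ G.darts, (G.polarCycles (c q.1) q.2).ncard :=
    Finset.set_ncard_biUnion_le _ _
  have h4 : 𝒜.card ≤ 1 + G.arcs.card + G.arcs.card ^ 2 :=
    card_ccwPatterns_le fun p hp => G.valid.1 _ _ (G.mem_edges_of_mem_arcs hp)
  calc (starCount G : ℝ)
      ≤ ∑ q ∈ 𝒜 ×ˢ G.darts, ((G.polarCycles (c q.1) q.2).ncard : ℝ) := mod_cast h1.trans h2
    _ ≤ ∑ _q ∈ 𝒜 ×ˢ G.darts, α * α ^ G.V.card := Finset.sum_le_sum fun q hq =>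
        G.ncard_polarCycles_le hα h3 (hmem q hq).1 (hmem q hq).2
    _ = 𝒜.card * (G.darts.card * (α * α ^ G.V.card)) := by
        rw [Finset.sum_const, Finset.card_product, nsmul_eq_mul]
        push_cast
        ring
    _ ≤ _ := by
        gcongr
        exact_mod_cast h4

/-- every PSLG on `n` points contains at most `C·n³·αⁿ` star-shaped polygons. -/
theorem starShaped_upper_bound :
    ∃ C : ℝ, 0 < C ∧ ∀ α : ℝ, 1 < α → α ^ 3 = α ^ 2 + α + 1 →
      ∀ (n : ℕ) (G : PSLG), G.V.card = n →
        (starCount G : ℝ) ≤ C * n ^ 3 * α ^ n := by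
  refine ⟨156, by norm_num, fun α hα h3 n G hn => (starCount_le hα h3 G).trans ?_⟩
  have hα2 := tribonacci_root_lt_two hα h3
  have h1 : (G.arcs.card : ℝ) ≤ 3 * n := by exact_mod_cast hn ▸ G.card_arcs_le
  have h2 : (G.darts.card : ℝ) ≤ 6 * n := by exact_mod_cast hn ▸ G.card_darts_le
  have h4 : (n : ℝ) ≤ n ^ 3 := mod_cast Nat.le_self_pow (by norm_num) n
  have h5 : (n : ℝ) ^ 2 ≤ n ^ 3 := by
    rcases n.eq_zero_or_pos with h0 | h0
    · simp [h0]
    · exact_mod_cast Nat.pow_le_pow_right h0 (by norm_num)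
  rw [hn]
  calc _ ≤ (1 + 3 * n + (3 * n) ^ 2) * (6 * n * (2 * α ^ n)) := by gcongr
    _ = (12 * n + 36 * n ^ 2 + 108 * n ^ 3) * α ^ n := by ring
    _ ≤ _ := by
      gcongr
      linarith

end
end

section
/- There exists a constant c > 0 such that for every integer ℓ ≥ 1 there is a plane straight-line graph on a set of n = 2^ℓ + 2 points in ℝ² that contains at least c·1.7003ⁿ x-monotone paths. -/
open scoped BigOperators

noncomputable section

namespace LayeredStrip

/-- The arcs of the strip graph on `ℕ`: `i → i + d` for `d` one of `1, 2, 4, 8, 16`, aligned. -/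
def Arc (i j : ℕ) : Prop := ∃ d ∈ [1, 2, 4, 8, 16], j = i + d ∧ i % d < 2

instance (i j : ℕ) : Decidable (Arc i j) := by unfold Arc; infer_instance

/-- The ordinates: even indices lie on convex arcs above the axis, odd ones on the
mirrored arcs below it, with period `16`. -/
def height (i : ℕ) : ℤ :=
  let s : ℤ := 2 * ((i % 16 / 2 : ℕ) : ℤ)
  (if i % 2 = 0 then 1 else -1) * (1000 - s * (16 - s))

/-- The vertices of the strip graph. -/
def pt (i : ℕ) : Pt := ((i : ℝ), (height i : ℝ))

/-- Signed area of the triangle on the vertices `i`, `j`, `k`. -/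
def orient (i j k : ℕ) : ℤ :=
  (height k - height i) * ((j : ℤ) - i) - ((k : ℤ) - i) * (height j - height i)

/-- The two numbers lie weakly on the same side of zero, and not both are zero. -/
def SameSide (a b : ℤ) : Prop := (0 ≤ a ∧ 0 ≤ b ∧ 0 < a + b) ∨ (a ≤ 0 ∧ b ≤ 0 ∧ a + b < 0)

instance (a b : ℤ) : Decidable (SameSide a b) := by unfold SameSide; infer_instance

lemma Arc.lt {i j : ℕ} (h : Arc i j) : i < j := by
  obtain ⟨d, hd, rfl, -⟩ := h
  simp only [List.mem_cons, List.not_mem_nil, or_false] at hd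
  omega

lemma height_add_period (q i : ℕ) : height (16 * q + i) = height i := by
  have h1 : (16 * q + i) % 16 = i % 16 := by omega
  have h2 : (16 * q + i) % 2 = i % 2 := by omega
  simp only [height, h1, h2]

lemma orient_add_period (q i j k : ℕ) :
    orient (16 * q + i) (16 * q + j) (16 * q + k) = orient i j k := by
  simp only [orient, height_add_period]
  push_cast
  ring

lemma orient_ne_zero_base : ∀ i ∈ List.range 16, ∀ d ∈ [1, 2, 4, 8, 16], i % d < 2 →
    ∀ t ∈ List.range d, t ≠ 0 → orient i (i + d) (i + t) ≠ 0 := by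
  decide +kernel

lemma sameSide_base : ∀ i ∈ List.range 16, ∀ d ∈ [1, 2, 4, 8, 16], i % d < 2 →
    ∀ t ∈ List.range d, ∀ e ∈ [1, 2, 4, 8, 16], (i + t) % e < 2 → (t ≠ 0 ∨ e ≠ d) →
      (t + e ≤ d → SameSide (orient i (i + d) (i + t)) (orient i (i + d) (i + t + e))) ∧
      (d ≤ t + e → SameSide (orient i (i + d) (i + t)) (-orient (i + t) (i + t + e) (i + d))) := by
  decide +kernel

lemma mod_lt_two_of_add_period {d : ℕ} (hd : d ∈ [1, 2, 4, 8, 16]) {q i : ℕ}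
    (h : (16 * q + i) % d < 2) : i % d < 2 := by
  simp only [List.mem_cons, List.not_mem_nil, or_false] at hd
  rcases hd with rfl | rfl | rfl | rfl | rfl <;> omega

lemma orient_ne_zero {i j k : ℕ} (h : Arc i j) (hik : i < k) (hkj : k < j) :
    orient i j k ≠ 0 := by
  obtain ⟨d, hd, rfl, hm⟩ := h
  obtain ⟨t, rfl⟩ := Nat.exists_eq_add_of_lt hik
  have hi : i = 16 * (i / 16) + i % 16 := by omega
  rw [hi] at hm ⊢
  have := orient_ne_zero_base (i % 16) (List.mem_range.2 (Nat.mod_lt _ (by norm_num))) d hd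
    (mod_lt_two_of_add_period hd hm) (t + 1) (List.mem_range.2 (by omega)) (by omega)
  rw [← orient_add_period (i / 16)] at this
  simpa only [add_assoc] using this

lemma sameSide_of_arcs {i j k l : ℕ} (h : Arc i j) (h' : Arc k l) (hik : i ≤ k) (hkj : k < j)
    (hne : i ≠ k ∨ j ≠ l) :
    (l ≤ j → SameSide (orient i j k) (orient i j l)) ∧
      (j ≤ l → SameSide (orient i j k) (-orient k l j)) := by
  obtain ⟨d, hd, rfl, hm⟩ := h
  obtain ⟨e, he, rfl, hm'⟩ := h'
  obtain ⟨t, rfl⟩ := Nat.exists_eq_add_of_le hik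
  have hc : t ≠ 0 ∨ e ≠ d := by omega
  have hl : i + t + e ≤ i + d ↔ t + e ≤ d := by omega
  have hg : i + d ≤ i + t + e ↔ d ≤ t + e := by omega
  rw [hl, hg]
  have ht : t < d := by omega
  clear hl hg hne hkj hik
  have hi : i = 16 * (i / 16) + i % 16 := by omega
  rw [hi] at hm hm' ⊢
  rw [add_assoc] at hm'
  have := sameSide_base (i % 16) (List.mem_range.2 (Nat.mod_lt _ (by norm_num))) d hd
    (mod_lt_two_of_add_period hd hm) t (List.mem_range.2 ht) e he
    (mod_lt_two_of_add_period he hm') hc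
  simpa only [add_assoc, orient_add_period] using this

lemma pt_injective : Function.Injective pt := by
  intro i j h
  simpa [pt] using congrArg Prod.fst h

/-- A point of the open segment between the vertices `i < j` has abscissa strictly between
`i` and `j` and lies on the line through them. -/
lemma mem_openSegment_pt {i j : ℕ} (hij : i < j) {p : Pt} (hp : p ∈ openSegment ℝ (pt i) (pt j)) :
    (i : ℝ) < p.1 ∧ p.1 < j ∧
      (p.2 - height i) * ((j : ℝ) - i) = (p.1 - i) * ((height j : ℝ) - height i) := by
  obtain ⟨a, b, ha, hb, hab, rfl⟩ := hp
  have hij' : (i : ℝ) < j := by exact_mod_cast hij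
  obtain rfl : a = 1 - b := by linarith
  simp only [pt, Prod.smul_mk, Prod.mk_add_mk, smul_eq_mul]
  refine ⟨by nlinarith, by nlinarith, by ring⟩

lemma pt_notMem_openSegment {i j k : ℕ} (h : Arc i j) : pt k ∉ openSegment ℝ (pt i) (pt j) := by
  intro hk
  obtain ⟨h1, h2, h3⟩ := mem_openSegment_pt h.lt hk
  simp only [pt, Nat.cast_lt] at h1 h2 h3
  refine orient_ne_zero h h1 h2 ?_
  have : ((orient i j k : ℤ) : ℝ) = 0 := by
    simp only [orient]
    push_cast
    linarith
  exact_mod_cast this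

lemma SameSide.false_of_combination {a b : ℤ} (h : SameSide a b) {u v : ℝ} (hu : 0 < u)
    (hv : 0 < v) (huv : u * a + v * b = 0) : False := by
  rcases h with ⟨ha, hb, hab⟩ | ⟨ha, hb, hab⟩
  · have ha' : (0 : ℝ) ≤ a := by exact_mod_cast ha
    have hb' : (0 : ℝ) ≤ b := by exact_mod_cast hb
    have hab' : (0 : ℝ) < a + b := by exact_mod_cast hab
    have h1 := mul_nonneg hu.le ha'
    have h2 := mul_nonneg hv.le hb'
    have h3 : u * a = 0 := by linarith
    have h4 : v * b = 0 := by linarith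
    simp only [mul_eq_zero, hu.ne', hv.ne', false_or] at h3 h4
    linarith
  · have ha' : (a : ℝ) ≤ 0 := by exact_mod_cast ha
    have hb' : (b : ℝ) ≤ 0 := by exact_mod_cast hb
    have hab' : (a + b : ℝ) < 0 := by exact_mod_cast hab
    have h1 := mul_nonpos_of_nonneg_of_nonpos hu.le ha'
    have h2 := mul_nonpos_of_nonneg_of_nonpos hv.le hb'
    have h3 : u * a = 0 := by linarith
    have h4 : v * b = 0 := by linarith
    simp only [mul_eq_zero, hu.ne', hv.ne', false_or] at h3 h4
    linarith

lemma openSegment_disjoint_of_le {i j k l : ℕ} (h : Arc i j) (h' : Arc k l) (hik : i ≤ k)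
    (hne : i ≠ k ∨ j ≠ l) {p : Pt} (hp : p ∈ openSegment ℝ (pt i) (pt j))
    (hp' : p ∈ openSegment ℝ (pt k) (pt l)) : False := by
  obtain ⟨h1, h2, h3⟩ := mem_openSegment_pt h.lt hp
  obtain ⟨h1', h2', h3'⟩ := mem_openSegment_pt h'.lt hp'
  have hkj : k < j := by exact_mod_cast h1'.trans h2
  have hij : (0 : ℝ) < (j : ℝ) - i := sub_pos.2 (by exact_mod_cast h.lt)
  have hkl : (0 : ℝ) < (l : ℝ) - k := sub_pos.2 (by exact_mod_cast h'.lt)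
  obtain ⟨hin, hout⟩ := sameSide_of_arcs h h' hik hkj hne
  rcases le_total l j with hlj | hjl
  · refine (hin hlj).false_of_combination (sub_pos.2 h2') (sub_pos.2 h1') ?_
    simp only [orient]
    push_cast
    linear_combination ((l : ℝ) - k) * h3 - ((j : ℝ) - i) * h3'
  · refine (hout hjl).false_of_combination (mul_pos hkl (sub_pos.2 h2))
      (mul_pos hij (sub_pos.2 h1')) ?_
    simp only [orient]
    push_cast
    linear_combination ((l : ℝ) - k) * ((j : ℝ) - k) * h3 - ((j : ℝ) - i) * ((j : ℝ) - k) * h3'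

lemma openSegment_inter_eq_empty {i j k l : ℕ} (h : Arc i j) (h' : Arc k l)
    (hne : i ≠ k ∨ j ≠ l) :
    openSegment ℝ (pt i) (pt j) ∩ openSegment ℝ (pt k) (pt l) = ∅ := by
  refine Set.eq_empty_of_forall_notMem fun p ⟨hp, hp'⟩ => ?_
  rcases le_total i k with hik | hki
  · exact openSegment_disjoint_of_le h h' hik hne hp hp'
  · exact openSegment_disjoint_of_le h' h hki (hne.imp Ne.symm Ne.symm) hp' hp

open Classical in
/-- The edges of the strip graph on the first `n` vertices. -/
def edges (n : ℕ) : Finset (Sym2 Pt) :=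
  ((Finset.range n ×ˢ Finset.range n).filter fun p => Arc p.1 p.2).image
    fun p => s(pt p.1, pt p.2)

lemma mem_edges {n : ℕ} {e : Sym2 Pt} :
    e ∈ edges n ↔ ∃ i j, i < n ∧ j < n ∧ Arc i j ∧ s(pt i, pt j) = e := by
  simp [edges, and_assoc]

lemma openSegment_eq_of_mk_eq {a b c d : Pt} (h : s(a, b) = s(c, d)) :
    openSegment ℝ a b = openSegment ℝ c d := by
  rcases Sym2.eq_iff.1 h with ⟨rfl, rfl⟩ | ⟨rfl, rfl⟩
  · rfl
  · exact openSegment_symm ℝ _ _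

lemma validEdges (n : ℕ) : ValidEdges ((Finset.range n).map ⟨pt, pt_injective⟩) (edges n) := by
  have hmem : ∀ i < n, pt i ∈ (Finset.range n).map ⟨pt, pt_injective⟩ := fun i hi =>
    Finset.mem_map_of_mem ⟨pt, pt_injective⟩ (Finset.mem_range.2 hi)
  refine ⟨fun a b h => ?_, fun a b h v hv => ?_, fun a b c d h h' hne => ?_⟩
  · obtain ⟨i, j, hi, hj, hA, he⟩ := mem_edges.1 h
    have hij := pt_injective.ne hA.lt.ne
    rcases Sym2.eq_iff.1 he with ⟨rfl, rfl⟩ | ⟨rfl, rfl⟩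
    · exact ⟨hmem i hi, hmem j hj, hij⟩
    · exact ⟨hmem j hj, hmem i hi, hij.symm⟩
  · obtain ⟨i, j, -, -, hA, he⟩ := mem_edges.1 h
    obtain ⟨k, -, rfl⟩ := Finset.mem_map.1 hv
    rw [← openSegment_eq_of_mk_eq he]
    exact pt_notMem_openSegment hA
  · obtain ⟨i, j, -, -, hA, he⟩ := mem_edges.1 h
    obtain ⟨k, l, -, -, hA', he'⟩ := mem_edges.1 h'
    rw [← openSegment_eq_of_mk_eq he, ← openSegment_eq_of_mk_eq he']
    refine openSegment_inter_eq_empty hA hA' ?_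
    by_contra! hc
    exact hne (by rw [← he, ← he', hc.1, hc.2])

/-- The strip graph on the first `n` vertices. -/
def graph (n : ℕ) : PSLG where
  V := (Finset.range n).map ⟨pt, pt_injective⟩
  E := edges n
  valid := validEdges n

/-- The directed paths from `0` to `j`, each listed backwards. -/
def descents : ℕ → Finset (List ℕ)
  | 0 => {[0]}
  | j + 1 => (Finset.range (j + 1)).attach.biUnion fun i =>
      have := Finset.mem_range.1 i.2
      if Arc i (j + 1) then (descents i).image (List.cons (j + 1)) else ∅

lemma mem_descents_succ {j : ℕ} {L : List ℕ} :
    L ∈ descents (j + 1) ↔ ∃ i, Arc i (j + 1) ∧ ∃ M ∈ descents i, (j + 1) :: M = L := by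
  rw [descents]
  simp only [Finset.mem_biUnion, Finset.mem_attach, true_and, Subtype.exists, Finset.mem_range]
  constructor
  · rintro ⟨i, hi, h⟩
    split_ifs at h with hA
    · exact ⟨i, hA, by simpa using h⟩
    · simp at h
  · rintro ⟨i, hA, M, hM, rfl⟩
    refine ⟨i, hA.lt, ?_⟩
    rw [if_pos hA]
    exact Finset.mem_image_of_mem _ hM

lemma head?_of_mem_descents {j : ℕ} {L : List ℕ} (h : L ∈ descents j) : L.head? = some j := by
  cases j with
  | zero => simp [descents] at h; simp [h]
  | succ j => obtain ⟨i, -, M, -, rfl⟩ := mem_descents_succ.1 h; rfl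

lemma isChain_of_mem_descents {j : ℕ} {L : List ℕ} (h : L ∈ descents j) :
    L.IsChain fun a b => Arc b a := by
  induction j using Nat.strong_induction_on generalizing L with
  | _ j ih =>
    cases j with
    | zero => simp [descents] at h; simp [h]
    | succ j =>
      obtain ⟨i, hA, M, hM, rfl⟩ := mem_descents_succ.1 h
      refine List.isChain_cons.2 ⟨fun y hy => ?_, ih i hA.lt hM⟩
      rw [head?_of_mem_descents hM] at hy
      simpa [Option.mem_some_iff.1 hy] using hA

lemma two_le_length_of_mem_descents {j : ℕ} {L : List ℕ} (h : L ∈ descents (j + 1)) :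
    2 ≤ L.length := by
  obtain ⟨i, -, M, hM, rfl⟩ := mem_descents_succ.1 h
  have := head?_of_mem_descents hM
  cases M with
  | nil => simp at this
  | cons => simp

lemma le_of_mem_descents {j : ℕ} {L : List ℕ} (h : L ∈ descents j) : ∀ i ∈ L, i ≤ j := by
  induction j using Nat.strong_induction_on generalizing L with
  | _ j ih =>
    cases j with
    | zero => simp [descents] at h; simp [h]
    | succ j =>
      obtain ⟨i, hA, M, hM, rfl⟩ := mem_descents_succ.1 h
      intro k hk
      rcases List.mem_cons.1 hk with rfl | hk
      · exact le_rfl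
      · exact (ih i hA.lt hM k hk).trans hA.lt.le

/-- Paths ending in distinct predecessors of `j` extend to distinct paths ending in `j`. -/
lemma sum_card_descents_le {j : ℕ} {s : Finset ℕ} (hs : ∀ i ∈ s, Arc i (j + 1)) :
    ∑ i ∈ s, (descents i).card ≤ (descents (j + 1)).card := by
  have hinj : Function.Injective (List.cons (j + 1)) := List.cons_injective
  calc ∑ i ∈ s, (descents i).card
      = ∑ i ∈ s, ((descents i).image (List.cons (j + 1))).card :=
        Finset.sum_congr rfl fun i _ => (Finset.card_image_of_injective _ hinj).symm
    _ = (s.biUnion fun i => (descents i).image (List.cons (j + 1))).card := by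
        refine (Finset.card_biUnion fun a _ b _ hab => ?_).symm
        refine Finset.disjoint_left.2 fun L hL hL' => hab ?_
        obtain ⟨M, hM, rfl⟩ := Finset.mem_image.1 hL
        obtain ⟨M', hM', he⟩ := Finset.mem_image.1 hL'
        obtain rfl := hinj he
        exact Option.some_injective _
          ((head?_of_mem_descents hM).symm.trans (head?_of_mem_descents hM'))
    _ ≤ (descents (j + 1)).card := by
        refine Finset.card_le_card fun L hL => ?_
        obtain ⟨i, hi, hL⟩ := Finset.mem_biUnion.1 hL
        exact mem_descents_succ.2 ⟨i, hs i hi, Finset.mem_image.1 hL⟩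

lemma card_descents_add_two (i : ℕ) :
    (descents i).card + (descents (i + 1)).card ≤ (descents (i + 2)).card := by
  have := sum_card_descents_le (j := i + 1) (s := {i, i + 1}) (by
    simp only [Finset.mem_insert, Finset.mem_singleton, forall_eq_or_imp, forall_eq]
    exact ⟨⟨2, by simp, by omega, by omega⟩, ⟨1, by simp, by omega, by omega⟩⟩)
  rwa [Finset.sum_pair (by omega)] at this

lemma card_descents_add_four {i : ℕ} (hi : i % 4 < 2) :
    (descents i).card + (descents (i + 2)).card + (descents (i + 3)).card
      ≤ (descents (i + 4)).card := by
  have := sum_card_descents_le (j := i + 3) (s := {i, i + 2, i + 3}) (by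
    simp only [Finset.mem_insert, Finset.mem_singleton, forall_eq_or_imp, forall_eq]
    exact ⟨⟨4, by simp, by omega, hi⟩, ⟨2, by simp, by omega, by omega⟩,
      ⟨1, by simp, by omega, by omega⟩⟩)
  rwa [Finset.sum_insert (by simp), Finset.sum_pair (by omega), ← add_assoc] at this

lemma card_descents_add_eight {i : ℕ} (hi : i % 8 < 2) :
    (descents i).card + (descents (i + 4)).card + (descents (i + 6)).card
      + (descents (i + 7)).card ≤ (descents (i + 8)).card := by
  have := sum_card_descents_le (j := i + 7) (s := {i, i + 4, i + 6, i + 7}) (by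
    simp only [Finset.mem_insert, Finset.mem_singleton, forall_eq_or_imp, forall_eq]
    exact ⟨⟨8, by simp, by omega, hi⟩, ⟨4, by simp, by omega, by omega⟩,
      ⟨2, by simp, by omega, by omega⟩, ⟨1, by simp, by omega, by omega⟩⟩)
  rwa [Finset.sum_insert (by simp), Finset.sum_insert (by simp), Finset.sum_pair (by omega),
    ← add_assoc, ← add_assoc] at this

lemma card_descents_add_sixteen {i : ℕ} (hi : i % 16 < 2) :
    (descents i).card + (descents (i + 8)).card + (descents (i + 12)).card
      + (descents (i + 14)).card + (descents (i + 15)).card ≤ (descents (i + 16)).card := by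
  have := sum_card_descents_le (j := i + 15) (s := {i, i + 8, i + 12, i + 14, i + 15}) (by
    simp only [Finset.mem_insert, Finset.mem_singleton, forall_eq_or_imp, forall_eq]
    exact ⟨⟨16, by simp, by omega, hi⟩, ⟨8, by simp, by omega, by omega⟩,
      ⟨4, by simp, by omega, by omega⟩, ⟨2, by simp, by omega, by omega⟩,
      ⟨1, by simp, by omega, by omega⟩⟩)
  rwa [Finset.sum_insert (by simp), Finset.sum_insert (by simp), Finset.sum_insert (by simp),
    Finset.sum_pair (by omega), ← add_assoc, ← add_assoc, ← add_assoc] at this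

/-- The transfer inequalities across one period of the strip. -/
lemma card_descents_period {i : ℕ} (hi : i % 16 = 0) :
    1484 * (descents i).card + 1917 * (descents (i + 1)).card ≤ (descents (i + 16)).card ∧
    2628 * (descents i).card + 3401 * (descents (i + 1)).card ≤ (descents (i + 17)).card := by
  have h2 := card_descents_add_two i
  have h3 := card_descents_add_two (i + 1)
  have h4 := card_descents_add_four (i := i) (by omega)
  have h5 := card_descents_add_four (i := i + 1) (by omega)
  have h6 := card_descents_add_two (i + 4)
  have h7 := card_descents_add_two (i + 5)
  have h8 := card_descents_add_eight (i := i) (by omega)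
  have h9 := card_descents_add_eight (i := i + 1) (by omega)
  have h10 := card_descents_add_two (i + 8)
  have h11 := card_descents_add_two (i + 9)
  have h12 := card_descents_add_four (i := i + 8) (by omega)
  have h13 := card_descents_add_four (i := i + 9) (by omega)
  have h14 := card_descents_add_two (i + 12)
  have h15 := card_descents_add_two (i + 13)
  have h16 := card_descents_add_sixteen (i := i) (by omega)
  have h17 := card_descents_add_sixteen (i := i + 1) (by omega)
  simp only [add_assoc, Nat.reduceAdd] at h2 h3 h4 h5 h6 h7 h8 h9 h10 h11 h12 h13 h14 h15 h16 h17
  constructor <;> linarith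

lemma card_descents_le_succ (i : ℕ) : (descents i).card ≤ (descents (i + 1)).card := by
  have := sum_card_descents_le (j := i) (s := {i}) (by
    simp only [Finset.mem_singleton, forall_eq]
    exact ⟨1, by simp, rfl, by omega⟩)
  simpa using this

lemma pow_le_card_descents (a : ℕ) :
    ((1.7003 : ℝ) ^ 16) ^ a ≤ ((descents (16 * a + 1)).card : ℝ) := by
  have key : ∀ a : ℕ, 2293 * ((1.7003 : ℝ) ^ 16) ^ a ≤
      1000 * ((descents (16 * a)).card : ℝ) + 1293 * ((descents (16 * a + 1)).card : ℝ) := by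
    intro a
    induction a with
    | zero =>
      have h0 : (descents 0).card = 1 := by simp [descents]
      have h1 := card_descents_le_succ 0
      rw [h0] at h1
      have h1' : (1 : ℝ) ≤ ((descents (0 + 1)).card : ℝ) := by exact_mod_cast h1
      simp only [mul_zero, h0, pow_zero]
      push_cast
      linarith
    | succ a ih =>
      obtain ⟨h0, h1⟩ := card_descents_period (i := 16 * a) (by omega)
      have h0' : 1484 * ((descents (16 * a)).card : ℝ) + 1917 * ((descents (16 * a + 1)).card : ℝ)
          ≤ ((descents (16 * (a + 1))).card : ℝ) := by exact_mod_cast h0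
      have h1' : 2628 * ((descents (16 * a)).card : ℝ) + 3401 * ((descents (16 * a + 1)).card : ℝ)
          ≤ ((descents (16 * (a + 1) + 1)).card : ℝ) := by exact_mod_cast h1
      have hp : (1.7003 : ℝ) ^ 16 ≤ 4881 := by norm_num
      have hu : (0 : ℝ) ≤ ((descents (16 * a)).card : ℝ) := Nat.cast_nonneg _
      have hw : (0 : ℝ) ≤ ((descents (16 * a + 1)).card : ℝ) := Nat.cast_nonneg _
      have hmul : 2293 * ((1.7003 : ℝ) ^ 16) ^ (a + 1) ≤ 2293 * ((1.7003 : ℝ) ^ 16) ^ a * 4881 := by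
        rw [pow_succ, ← mul_assoc]
        exact mul_le_mul_of_nonneg_left hp (by positivity)
      linarith
  have h := key a
  have h' : ((descents (16 * a)).card : ℝ) ≤ ((descents (16 * a + 1)).card : ℝ) := by
    exact_mod_cast card_descents_le_succ (16 * a)
  linarith

lemma finite_setOf_isXMonotonePath (G : PSLG) : {L : List Pt | IsXMonotonePath G L}.Finite := by
  classical
  refine (G.V.powerset.biUnion fun s => s.val.lists.toFinset).finite_toSet.subset ?_
  rintro L ⟨⟨hlen, hE⟩, hx⟩
  have hnd : L.Nodup := by
    have : IsTrans Pt fun a b => a.1 < b.1 := ⟨fun _ _ _ => lt_trans⟩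
    refine (List.isChain_iff_pairwise.1 hx).imp fun {a b} hab h => ?_
    exact (lt_irrefl _ (h ▸ hab)).elim
  have hV : ∀ v ∈ L, v ∈ G.V := by
    intro v hv
    obtain ⟨k, hk, rfl⟩ := List.mem_iff_getElem.1 hv
    replace hE := List.isChain_iff_getElem.1 hE
    rcases Nat.lt_or_ge (k + 1) L.length with h | h
    · exact (G.valid.1 _ _ (hE k h)).1
    · obtain ⟨m, rfl⟩ : ∃ m, k = m + 1 := ⟨k - 1, by omega⟩
      exact (G.valid.1 _ _ (hE m hk)).2.1
  simp only [Finset.coe_biUnion, Set.mem_iUnion, Finset.mem_coe, Finset.mem_powerset]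
  refine ⟨L.toFinset, fun v hv => hV v (List.mem_toFinset.1 hv), ?_⟩
  rw [Multiset.mem_toFinset, Multiset.mem_lists_iff, List.toFinset_val, hnd.dedup]
  rfl

lemma card_descents_le_xMonCount {n j : ℕ} (hj : j + 1 < n) :
    (descents (j + 1)).card ≤ xMonCount (graph n) := by
  have hinj : Function.Injective fun L : List ℕ => L.reverse.map pt :=
    (List.map_injective_iff.2 pt_injective).comp List.reverse_injective
  rw [xMonCount, ← Set.ncard_coe_finset, ← Set.ncard_image_of_injective _ hinj]
  refine Set.ncard_le_ncard ?_ (finite_setOf_isXMonotonePath _)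
  rintro _ ⟨L, hL, rfl⟩
  rw [Finset.mem_coe] at hL
  have hchain : L.reverse.IsChain fun a b => Arc a b ∧ a < n ∧ b < n := by
    rw [List.isChain_reverse]
    have h := isChain_of_mem_descents hL
    rw [List.isChain_iff_getElem] at h ⊢
    intro k hk
    exact ⟨h k hk, (le_of_mem_descents hL _ (List.getElem_mem _)).trans_lt hj,
      (le_of_mem_descents hL _ (List.getElem_mem _)).trans_lt hj⟩
  refine ⟨⟨by simpa using two_le_length_of_mem_descents hL, ?_⟩, ?_⟩
  · refine (List.isChain_map pt).2 (hchain.imp fun a b h => ?_)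
    exact mem_edges.2 ⟨a, b, h.2.1, h.2.2, h.1, rfl⟩
  · refine (List.isChain_map pt).2 (hchain.imp fun a b h => ?_)
    simpa [pt] using h.1.lt

end LayeredStrip

/-- for every `ℓ ≥ 1` there is a PSLG on `n = 2^ℓ + 2` points with at
least `c·1.7003ⁿ` x-monotone paths, for an absolute constant `c > 0`. -/
theorem xMonotone_lower_bound :
    ∃ c : ℝ, 0 < c ∧ ∀ ℓ : ℕ, 1 ≤ ℓ →
      ∃ G : PSLG, G.V.card = 2 ^ ℓ + 2 ∧
        c * (1.7003 : ℝ) ^ (2 ^ ℓ + 2) ≤ (xMonCount G : ℝ) := by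
  refine ⟨((1.7003 : ℝ) ^ 17)⁻¹, by positivity, fun ℓ _ => ?_⟩
  refine ⟨LayeredStrip.graph (2 ^ ℓ + 2), by simp [LayeredStrip.graph], ?_⟩
  set m := 2 ^ ℓ
  have hcount : ((LayeredStrip.descents (16 * (m / 16) + 1)).card : ℝ) ≤
      (xMonCount (LayeredStrip.graph (m + 2)) : ℝ) := by
    exact_mod_cast LayeredStrip.card_descents_le_xMonCount (by omega)
  refine le_trans ?_ ((LayeredStrip.pow_le_card_descents (m / 16)).trans hcount)
  rw [inv_mul_le_iff₀ (by positivity), ← pow_mul, ← pow_add]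
  exact pow_le_pow_right₀ (by norm_num) (by omega)

end
end
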